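/- Let k ≥ 3, let r_1,…,r_k be fixed positive integers, r = r_1 + ⋯ + r_k, and let {G_i}_{i≥1} be a sequence of finite groups with identity e such that |G_i| → ∞, the exponent of G_i divides r, and gcd(r_j, |G_i|) = 1 for every j ∈ {1,…,k} and every i. Let S_i = {(x_1,…,x_k) ∈ G_i^k : x_1^{r_1}·x_2^{r_2}·…·x_k^{r_k} = e} and set p_i = |G_i|^{−(k−2)/(k−1)}. Then for every δ with 0 < δ ≤ 1/40 there exist constants c₁, c₂ > 0 (depending on δ and k) such that for every sequence p(i) ∈ [0,1]: if p(i) ≥ c₁·p_i for all i then P_{p(i)}({A ⊆ G_i : A is (δ,S_i)_k-stable}) → 1 as i → ∞, and if p(i) < c₂·p_i for all i then P_{p(i)}({A ⊆ G_i : A is (δ,S_i)_k-stable}) → 0 as i → ∞. -/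

import Mathlib

open Finset Filter Topology

attribute [local instance] Classical.propDecidable

/-- The set `S^{(k)}` of tuples of `S` with pairwise distinct entries. -/
noncomputable def distinctPart {k : ℕ} {G : Type} (S : Finset (Fin k → G)) :
    Finset (Fin k → G) :=
  S.filter fun x => Function.Injective x

/-- Probability assigned to a family `E` of subsets of `G` by the binomial random subset
`[G]_p`. -/
noncomputable def binomProb {G : Type} [Fintype G] (p : ℝ) (E : Finset (Finset G)) : ℝ :=
  ∑ A ∈ E, p ^ A.card * (1 - p) ^ (Fintype.card G - A.card)

/-- `X` is `(δ,S)_k`-stable. -/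
def StableK {k : ℕ} {G : Type} (δ : ℝ) (S : Finset (Fin k → G)) (X : Finset G) : Prop :=
  ∀ X' ⊆ X, δ * (X.card : ℝ) ≤ (X'.card : ℝ) →
    (∃ x ∈ S, ∀ j, x j ∈ X') ∧ (∃ x ∈ distinctPart S, ∀ j, x j ∈ X')


/-- Expectation of `F` over the `p`-random subset of `C`. -/
noncomputable def Ex {G : Type} (p : ℝ) (C : Finset G) (F : Finset G → ℝ) : ℝ :=
  ∑ R ∈ C.powerset, p ^ R.card * (1 - p) ^ (C.card - R.card) * F R

lemma Ex_empty {G : Type} (p : ℝ) (F : Finset G → ℝ) : Ex p ∅ F = F ∅ := by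
  simp [Ex]

lemma Ex_insert {G : Type} (p : ℝ) {C : Finset G} {v : G} (hv : v ∉ C) (F : Finset G → ℝ) :
    Ex p (insert v C) F = (1 - p) * Ex p C F + p * Ex p C (fun R => F (insert v R)) := by
  unfold Ex
  rw [Finset.sum_powerset_insert hv, Finset.mul_sum, Finset.mul_sum]
  congr 1
  · apply Finset.sum_congr rfl
    intro R hR
    have hRC := Finset.card_le_card (Finset.mem_powerset.1 hR)
    rw [Finset.card_insert_of_notMem hv, show C.card + 1 - R.card = (C.card - R.card) + 1 by omega]
    ring
  · apply Finset.sum_congr rfl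
    intro R hR
    have hvR : v ∉ R := fun h => hv (Finset.mem_powerset.1 hR h)
    rw [Finset.card_insert_of_notMem hv, Finset.card_insert_of_notMem hvR,
      show C.card + 1 - (R.card + 1) = (C.card - R.card) by omega]
    ring

lemma Ex_mono {G : Type} {p : ℝ} (h0 : 0 ≤ p) (h1 : p ≤ 1) (C : Finset G)
    {F F' : Finset G → ℝ} (h : ∀ R, R ⊆ C → F R ≤ F' R) : Ex p C F ≤ Ex p C F' := by
  apply Finset.sum_le_sum
  intro R hR
  have : 0 ≤ 1 - p := by linarith
  exact mul_le_mul_of_nonneg_left (h R (Finset.mem_powerset.1 hR)) (by positivity)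

lemma Ex_congr {G : Type} {p : ℝ} (C : Finset G)
    {F F' : Finset G → ℝ} (h : ∀ R, R ⊆ C → F R = F' R) : Ex p C F = Ex p C F' := by
  apply Finset.sum_congr rfl
  intro R hR
  rw [h R (Finset.mem_powerset.1 hR)]

lemma Ex_add {G : Type} (p : ℝ) (C : Finset G) (F F' : Finset G → ℝ) :
    Ex p C (fun R => F R + F' R) = Ex p C F + Ex p C F' := by
  simp [Ex, mul_add, Finset.sum_add_distrib]

lemma Ex_mul {G : Type} (p : ℝ) (C : Finset G) (c : ℝ) (F : Finset G → ℝ) :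
    Ex p C (fun R => c * F R) = c * Ex p C F := by
  simp only [Ex, Finset.mul_sum]
  exact Finset.sum_congr rfl fun R _ => by ring

lemma Ex_sum {G ι : Type} (p : ℝ) (C : Finset G) (s : Finset ι) (F : ι → Finset G → ℝ) :
    Ex p C (fun R => ∑ i ∈ s, F i R) = ∑ i ∈ s, Ex p C (F i) := by
  simp only [Ex, Finset.mul_sum]
  rw [Finset.sum_comm]

lemma Ex_prod {G : Type} (p : ℝ) (C : Finset G) (w : G → ℝ) :
    Ex p C (fun R => ∏ v ∈ R, w v) = ∏ v ∈ C, (1 - p + p * w v) := by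
  induction C using Finset.induction_on with
  | empty => simp [Ex_empty]
  | insert v C hv ih =>
    rw [Ex_insert p hv, Finset.prod_insert hv, ← ih]
    have : Ex p C (fun R => ∏ u ∈ insert v R, w u) = w v * Ex p C (fun R => ∏ u ∈ R, w u) := by
      rw [← Ex_mul]
      apply Ex_congr
      intro R hR
      rw [Finset.prod_insert (fun h => hv (hR h))]
    rw [this]; ring

lemma Ex_const {G : Type} (p : ℝ) (C : Finset G) (c : ℝ) :
    Ex p C (fun _ => c) = c := by
  have := Ex_prod p C (fun _ => 1)
  simp at this
  have h2 := Ex_mul p C c (fun _ => 1)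
  rw [this] at h2
  simpa using h2

lemma Ex_nonneg {G : Type} {p : ℝ} (h0 : 0 ≤ p) (h1 : p ≤ 1) (C : Finset G)
    {F : Finset G → ℝ} (h : ∀ R, R ⊆ C → 0 ≤ F R) : 0 ≤ Ex p C F := by
  rw [← Ex_const p C 0]
  exact Ex_mono h0 h1 C h

/-- empty-set lower bound -/
lemma Ex_ge_empty {G : Type} {p : ℝ} (h0 : 0 ≤ p) (h1 : p ≤ 1) (C : Finset G)
    {F : Finset G → ℝ} (h : ∀ R, 0 ≤ F R) : (1 - p) ^ C.card * F ∅ ≤ Ex p C F := by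
  have hp : 0 ≤ 1 - p := by linarith
  have := Finset.single_le_sum (s := C.powerset)
    (f := fun R => p ^ R.card * (1 - p) ^ (C.card - R.card) * F R)
    (fun R _ => mul_nonneg (by positivity) (h R)) (Finset.empty_mem_powerset C)
  simpa [Ex] using this

lemma Ex_sub_le {G : Type} {p : ℝ} (h0 : 0 ≤ p) (h1 : p ≤ 1) {C T : Finset G}
    (hd : Disjoint C T) {F : Finset G → ℝ} (hF : Antitone F) :
    Ex p (C ∪ T) F ≤ Ex p C F := by
  induction T using Finset.induction_on with
  | empty => simp
  | insert v T hv ih =>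
    rw [Finset.disjoint_insert_right] at hd
    rw [Finset.union_insert, Ex_insert p (by simp [hd.1, hv])]
    have h2 : Ex p (C ∪ T) (fun R => F (insert v R)) ≤ Ex p (C ∪ T) F :=
      Ex_mono h0 h1 _ fun R _ => hF (Finset.subset_insert v R)
    have := ih hd.2
    nlinarith

lemma Ex_union_le {G : Type} {p : ℝ} (h0 : 0 ≤ p) (h1 : p ≤ 1) {C T : Finset G}
    (hd : Disjoint C T) {F : Finset G → ℝ} (hF : Antitone F) :
    Ex p C (fun R => F (R ∪ T)) ≤ Ex p (C ∪ T) F := by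
  induction T using Finset.induction_on generalizing F with
  | empty => simp
  | insert v T hv ih =>
    rw [Finset.disjoint_insert_right] at hd
    rw [Finset.union_insert, Ex_insert p (by simp [hd.1, hv])]
    have h2 : Ex p (C ∪ T) (fun R => F (insert v R)) ≤ Ex p (C ∪ T) F :=
      Ex_mono h0 h1 _ fun R _ => hF (Finset.subset_insert v R)
    have h3 := ih hd.2 (F := fun R => F (insert v R))
      (fun A B h => hF (Finset.insert_subset_insert v h))
    have h4 : Ex p C (fun R => F (R ∪ insert v T)) = Ex p C (fun R => F (insert v (R ∪ T))) :=
      Ex_congr C fun R _ => by rw [Finset.union_insert]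
    rw [h4]
    nlinarith

lemma Ex_ind {G : Type} {p : ℝ} {C T : Finset G}
    (hd : Disjoint C T) (F : Finset G → ℝ) :
    Ex p (C ∪ T) (fun R => if T ⊆ R then F R else 0) =
      p ^ T.card * Ex p C (fun R => F (R ∪ T)) := by
  induction T using Finset.induction_on generalizing F with
  | empty => simp
  | insert v T hv ih =>
    rw [Finset.disjoint_insert_right] at hd
    have hvn : v ∉ C ∪ T := by simp [hd.1, hv]
    rw [Finset.union_insert, Ex_insert p hvn]
    have e1 : Ex p (C ∪ T) (fun R => if insert v T ⊆ R then F R else 0) = 0 := by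
      refine (Ex_congr _ ?_).trans (Ex_const p (C ∪ T) 0)
      intro R hR
      rw [if_neg]
      intro h
      exact hvn (hR (h (Finset.mem_insert_self v T)))
    have e2 : Ex p (C ∪ T) (fun R => if insert v T ⊆ insert v R then F (insert v R) else 0)
        = Ex p (C ∪ T) (fun R => if T ⊆ R then F (insert v R) else 0) := by
      apply Ex_congr
      intro R hR
      have : insert v T ⊆ insert v R ↔ T ⊆ R := Finset.insert_subset_insert_iff hv
      simp only [this]
    rw [e1, e2, ih hd.2, Finset.card_insert_of_notMem hv]
    have h4 : Ex p C (fun R => F (R ∪ insert v T)) = Ex p C (fun R => F (insert v (R ∪ T))) :=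
      Ex_congr C fun R _ => by rw [Finset.union_insert]
    rw [h4]; ring

lemma Ex_sub {G : Type} {p : ℝ} {C T : Finset G} (hT : T ⊆ C) :
    Ex p C (fun R => if T ⊆ R then 1 else 0) = p ^ T.card := by
  have := Ex_ind (p := p) (C := C \ T) (T := T) Finset.sdiff_disjoint (fun _ => 1)
  rw [Finset.sdiff_union_of_subset hT, Ex_const] at this
  simpa using this

/-- Harris-type bound -/
lemma Ex_harris {G : Type} {p : ℝ} (h0 : 0 ≤ p) (h1 : p ≤ 1) {C T : Finset G} (hT : T ⊆ C)
    {F : Finset G → ℝ} (hF : Antitone F) :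
    Ex p C (fun R => if T ⊆ R then F R else 0) ≤ p ^ T.card * Ex p C F := by
  have := Ex_ind (p := p) (C := C \ T) (T := T) Finset.sdiff_disjoint F
  have h2 := Ex_union_le h0 h1 (C := C \ T) (T := T) Finset.sdiff_disjoint hF
  rw [Finset.sdiff_union_of_subset hT] at this h2
  rw [this]
  exact mul_le_mul_of_nonneg_left h2 (by positivity)

lemma Ex_indep {G : Type} {p : ℝ} (h0 : 0 ≤ p) (h1 : p ≤ 1) {C T : Finset G} (hT : T ⊆ C)
    {F : Finset G → ℝ} (hF : Antitone F) (hi : ∀ R, F (R ∪ T) = F R) :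
    p ^ T.card * Ex p C F ≤ Ex p C (fun R => if T ⊆ R then F R else 0) := by
  have := Ex_ind (p := p) (C := C \ T) (T := T) Finset.sdiff_disjoint F
  have h2 := Ex_sub_le h0 h1 (C := C \ T) (T := T) Finset.sdiff_disjoint hF
  rw [Finset.sdiff_union_of_subset hT] at this h2
  rw [this]
  simp only [hi]
  exact mul_le_mul_of_nonneg_left h2 (by positivity)

/-- Janson-type inequality (Boppana--Spencer). -/
lemma janson {G : Type} {p : ℝ} (h0 : 0 ≤ p) (h1 : p ≤ 1) (C : Finset G)
    (J : Finset (Finset G)) (hJ : ∀ E ∈ J, E ⊆ C) :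
    Ex p C (fun R => if ∀ E ∈ J, ¬ E ⊆ R then 1 else 0) ≤
      Real.exp (-(∑ E ∈ J, p ^ E.card) +
        ∑ E ∈ J, ∑ E' ∈ J.filter (fun E' => E' ≠ E ∧ ¬ Disjoint E E'), p ^ (E ∪ E').card) := by
  induction J using Finset.induction_on with
  | empty => simp [Ex_const]
  | insert E J hE ih =>
    have ih := ih (fun E' h => hJ E' (Finset.mem_insert_of_mem h))
    have hEC := hJ E (Finset.mem_insert_self E J)
    set N : Finset (Finset G) := J.filter (fun E' => ¬ Disjoint E E') with hN
    set D : Finset G → ℝ := fun R => if ∀ E ∈ J, ¬ E ⊆ R then 1 else 0 with hD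
    set D0 : Finset G → ℝ := fun R => if ∀ E' ∈ J, Disjoint E E' → ¬ E' ⊆ R then 1 else 0 with hD0
    set q : ℝ := ∑ E' ∈ N, p ^ (E ∪ E').card with hq
    have hD0a : Antitone D0 := by
      intro A B hAB
      simp only [hD0]
      split_ifs with h2 h3
      · exact le_rfl
      · exact absurd (fun E' h h' h'' => h2 E' h h' (h''.trans hAB)) h3
      · exact zero_le_one
      · exact le_rfl
    have hD0i : ∀ R, D0 (R ∪ E) = D0 R := by
      intro R
      simp only [hD0]
      congr 1
      apply propext
      refine forall₃_congr fun E' _ hd => not_congr ?_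
      constructor
      · intro h x hx
        rcases Finset.mem_union.1 (h hx) with h' | h'
        · exact h'
        · exact absurd hx (Finset.disjoint_left.1 hd h')
      · intro h; exact h.trans Finset.subset_union_left
    have hD0D : Ex p C D ≤ Ex p C D0 := by
      apply Ex_mono h0 h1
      intro R _
      simp only [hD, hD0]
      split_ifs with h2 h3
      · exact le_rfl
      · exact absurd (fun E' h _ => h2 E' h) h3
      · exact zero_le_one
      · exact le_rfl
    have hDn : 0 ≤ Ex p C D := Ex_nonneg h0 h1 _ (by intro R _; simp only [hD]; split_ifs <;> norm_num)
    -- P(E ⊆ R, D)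
    have key : (p ^ E.card - q) * Ex p C D ≤ Ex p C (fun R => if E ⊆ R then D R else 0) := by
      have a1 : Ex p C (fun R => if E ⊆ R then D0 R else 0) ≤
          Ex p C (fun R => (if E ⊆ R then D R else 0) +
            ∑ E' ∈ N, (if E ∪ E' ⊆ R then D0 R else 0)) := by
        apply Ex_mono h0 h1
        intro R _
        have hD0n : 0 ≤ D0 R := by simp only [hD0]; split_ifs <;> norm_num
        have hsn : ∀ E' ∈ N, (0:ℝ) ≤ (if E ∪ E' ⊆ R then D0 R else 0) := by
          intro E' _; split_ifs
          · exact hD0n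
          · exact le_rfl
        by_cases hER : E ⊆ R
        · simp only [hER, if_true]
          by_cases hDR : ∀ E ∈ J, ¬ E ⊆ R
          · have : D R = 1 := by simp only [hD]; rw [if_pos hDR]
            rw [this]
            have h5 : D0 R ≤ 1 := by simp only [hD0]; split_ifs <;> norm_num
            have := Finset.sum_nonneg hsn
            linarith
          · have : D R = 0 := by simp only [hD]; rw [if_neg hDR]
            rw [this, zero_add]
            push Not at hDR
            obtain ⟨E', hE', hE'R⟩ := hDR
            by_cases hdis : Disjoint E E'
            · have : D0 R = 0 := by
                simp only [hD0]; rw [if_neg]; intro h; exact h E' hE' hdis hE'R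
              rw [this]; simp
            · have hm : E' ∈ N := by simp [hN, hE', hdis]
              have := Finset.single_le_sum hsn hm
              rw [if_pos (Finset.union_subset hER hE'R)] at this
              exact this
        · simp only [hER, if_false, zero_add]
          exact Finset.sum_nonneg hsn
      rw [Ex_add, Ex_sum] at a1
      have a2 := Ex_indep h0 h1 hEC hD0a hD0i
      have a3 : ∑ E' ∈ N, Ex p C (fun R => if E ∪ E' ⊆ R then D0 R else 0) ≤ q * Ex p C D0 := by
        rw [hq, Finset.sum_mul]
        apply Finset.sum_le_sum
        intro E' hE'
        apply Ex_harris h0 h1 _ hD0a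
        exact Finset.union_subset hEC (hJ E' (Finset.mem_insert_of_mem (Finset.mem_filter.1 hE').1))
      have a4 : (p ^ E.card - q) * Ex p C D0 ≤ Ex p C (fun R => if E ⊆ R then D R else 0) := by
        linarith
      have a5 : 0 ≤ Ex p C (fun R => if E ⊆ R then D R else 0) := by
        apply Ex_nonneg h0 h1; intro R _; simp only [hD]; split_ifs <;> norm_num
      rcases le_total 0 (p ^ E.card - q) with h | h
      · exact (mul_le_mul_of_nonneg_left hD0D h).trans a4
      · exact (mul_nonpos_of_nonpos_of_nonneg h hDn).trans a5
    have split : Ex p C (fun R => if ∀ E' ∈ insert E J, ¬ E' ⊆ R then 1 else 0)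
        + Ex p C (fun R => if E ⊆ R then D R else 0) = Ex p C D := by
      rw [← Ex_add]
      apply Ex_congr
      intro R _
      simp only [Finset.forall_mem_insert, hD]
      by_cases hER : E ⊆ R <;> simp [hER]
    have h6 : Ex p C (fun R => if ∀ E' ∈ insert E J, ¬ E' ⊆ R then 1 else 0) ≤
        Real.exp (-p ^ E.card + q) * Ex p C D := by
      have := Real.add_one_le_exp (-p ^ E.card + q)
      have := mul_le_mul_of_nonneg_right this hDn
      linarith
    refine h6.trans ((mul_le_mul_of_nonneg_left ih (Real.exp_pos _).le).trans ?_)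
    rw [← Real.exp_add]
    apply Real.exp_le_exp.2
    rw [Finset.sum_insert hE, Finset.sum_insert hE]
    have b1 : q ≤ ∑ E' ∈ (insert E J).filter (fun E' => E' ≠ E ∧ ¬ Disjoint E E'),
        p ^ (E ∪ E').card := by
      apply Finset.sum_le_sum_of_subset_of_nonneg
      · intro E' hE'
        rw [hN, Finset.mem_filter] at hE'
        rw [Finset.mem_filter]
        refine ⟨Finset.mem_insert_of_mem hE'.1, ?_, hE'.2⟩
        rintro rfl; exact hE hE'.1
      · intros; positivity
    have b2 : ∑ E₁ ∈ J, ∑ E' ∈ J.filter (fun E' => E' ≠ E₁ ∧ ¬ Disjoint E₁ E'), p ^ (E₁ ∪ E').card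
        ≤ ∑ E₁ ∈ J, ∑ E' ∈ (insert E J).filter (fun E' => E' ≠ E₁ ∧ ¬ Disjoint E₁ E'),
          p ^ (E₁ ∪ E').card := by
      apply Finset.sum_le_sum
      intro E₁ _
      apply Finset.sum_le_sum_of_subset_of_nonneg
      · exact Finset.filter_subset_filter _ (Finset.subset_insert _ _)
      · intros; positivity
    linarith

lemma entropy_step {p a b : ℝ} (h0 : 0 < p) (h1 : p < 1) (hb : 0 ≤ b) (hba : b ≤ a) :
    Real.negMulLog ((1 - p) * a + p * b) ≤
      (1 - p) * Real.negMulLog a + p * Real.negMulLog b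
        + -Real.log (1 - p) * ((1 - p) * (a - b)) := by
  have hq : 0 < 1 - p := by linarith
  rcases eq_or_lt_of_le (hb.trans hba) with ha | ha
  · have : b = 0 := by linarith
    subst this; rw [← ha]; simp
  · set Φ := (1 - p) * a + p * b with hΦ
    have hΦ0 : 0 < Φ := by positivity
    -- log (Φ/a) ≥ (1 - b/a) log (1-p)
    have c1 : (a - b) * Real.log (1 - p) ≤ a * (Real.log Φ - Real.log a) := by
      have hconc := strictConcaveOn_log_Ioi.concaveOn.2 (Set.mem_Ioi.2 hq)
        (Set.mem_Ioi.2 one_pos) (div_nonneg (sub_nonneg.2 hba) ha.le : 0 ≤ (a - b) / a)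
        (div_nonneg hb ha.le : 0 ≤ b / a) (by field_simp; ring)
      simp only [smul_eq_mul, Real.log_one, mul_zero, add_zero, mul_one] at hconc
      have e : (a - b) / a * (1 - p) + b / a = Φ / a := by
        rw [hΦ]; field_simp; ring
      rw [e, Real.log_div hΦ0.ne' ha.ne'] at hconc
      have := mul_le_mul_of_nonneg_left hconc ha.le
      calc (a - b) * Real.log (1 - p) = a * ((a - b) / a * Real.log (1 - p)) := by field_simp
        _ ≤ _ := this
    have c2 : 0 ≤ b * (Real.log Φ - Real.log b) := by
      rcases eq_or_lt_of_le hb with hb0 | hb0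
      · rw [← hb0]; simp
      · apply mul_nonneg hb
        have : b ≤ Φ := by rw [hΦ]; nlinarith
        have := Real.log_le_log hb0 this
        linarith
    simp only [Real.negMulLog]
    have e1 : -Φ * Real.log Φ = -((1 - p) * a * Real.log Φ) - p * (b * Real.log Φ) := by
      conv_lhs => rw [hΦ]
      rw [← hΦ]; ring
    rw [e1]
    have m1 := mul_le_mul_of_nonneg_left c1 hq.le
    have m2 := mul_nonneg h0.le c2
    nlinarith

lemma entropy {G : Type} {p : ℝ} (h0 : 0 < p) (h1 : p < 1) (C : Finset G)
    (F : Finset G → ℝ) (hF : Antitone F) (hF01 : ∀ R, F R = 0 ∨ F R = 1) :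
    Real.negMulLog (Ex p C F) ≤
      -Real.log (1 - p) * ∑ v ∈ C, (Ex p C F - Ex p (C.erase v) (fun R => F (insert v R))) := by
  induction C using Finset.induction_on generalizing F with
  | empty =>
    rw [Ex_empty]
    rcases hF01 ∅ with h | h <;> simp [h]
  | insert w C hw ih =>
    have hFn : ∀ R, 0 ≤ F R := fun R => by rcases hF01 R with h | h <;> simp [h]
    have ha := ih F hF hF01
    have hb := ih (fun R => F (insert w R)) (fun A B h => hF (Finset.insert_subset_insert w h))
      (fun R => hF01 _)
    set a := Ex p C F with hadef
    set b := Ex p C (fun R => F (insert w R)) with hbdef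
    have hb0 : 0 ≤ b := Ex_nonneg h0.le h1.le _ fun R _ => hFn _
    have hba : b ≤ a := Ex_mono h0.le h1.le _ fun R _ => hF (Finset.subset_insert w R)
    rw [Finset.sum_insert hw, Ex_insert p hw, Finset.erase_insert hw]
    have hs := entropy_step h0 h1 hb0 hba
    refine hs.trans ?_
    have hsum : ∑ v ∈ C, ((1 - p) * a + p * b - Ex p ((insert w C).erase v) (fun R => F (insert v R)))
        = (1 - p) * ∑ v ∈ C, (a - Ex p (C.erase v) (fun R => F (insert v R)))
          + p * ∑ v ∈ C, (b - Ex p (C.erase v) (fun R => F (insert w (insert v R)))) := by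
      rw [Finset.mul_sum, Finset.mul_sum, ← Finset.sum_add_distrib]
      apply Finset.sum_congr rfl
      intro v hv
      have hvw : w ≠ v := fun h => hw (h ▸ hv)
      rw [Finset.erase_insert_of_ne hvw, Ex_insert p (by simp [hw])]
      have : ∀ R : Finset G, insert v (insert w R) = insert w (insert v R) :=
        fun R => Finset.insert_comm _ _ _
      simp only [this]; ring
    rw [← hadef, ← hbdef, hsum]
    have hq : 0 < 1 - p := by linarith
    have m1 := mul_le_mul_of_nonneg_left ha hq.le
    have m2 := mul_le_mul_of_nonneg_left hb h0.le
    have : (1 - p) * a + p * b - b = (1 - p) * (a - b) := by ring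
    rw [this]
    linarith

/-- indicator of `R ∪ S ∈ D` -/
noncomputable def ind {G : Type} (D : Finset G → Prop) (S R : Finset G) : ℝ :=
  if D (R ∪ S) then 1 else 0

lemma ind_nonneg {G : Type} (D : Finset G → Prop) (S R : Finset G) : 0 ≤ ind D S R := by
  unfold ind; split_ifs <;> norm_num

lemma ind_anti {G : Type} {D : Finset G → Prop} (hD : ∀ A B, A ⊆ B → D B → D A) (S : Finset G) :
    Antitone (ind D S) := by
  intro A B h
  unfold ind
  split_ifs with h1 h2
  · exact le_rfl
  · exact absurd (hD _ _ (Finset.union_subset_union_left h) h1) h2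
  · exact zero_le_one
  · exact le_rfl

lemma container_aux {G : Type} {p ε : ℝ} (h0 : 0 < p) (h1 : p < 1) (he0 : 0 < ε) (he1 : ε < 1)
    {D : Finset G → Prop} (hD : ∀ A B, A ⊆ B → D B → D A) (m : ℕ) :
    ∀ (S C : Finset G), C.card = m → Disjoint C S →
    ∃ f : Finset G → Finset G, ∀ I, D I → S ⊆ I → I ⊆ S ∪ C → ∃ S', S ⊆ S' ∧ S' ⊆ I ∧
      I ⊆ S' ∪ f S' ∧ f S' ⊆ C ∧
      (1 - p) ^ C.card * (1 - ε) ^ S.card * Ex p (f S') (ind D S') ≤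
        (1 - p) ^ (f S').card * (1 - ε) ^ S'.card * Ex p C (ind D S) ∧
      ∀ v ∈ f S', (1 - ε) * Ex p (f S') (ind D S') ≤
        Ex p ((f S').erase v) (fun R => ind D S' (insert v R)) := by
  have hq : 0 < 1 - p := by linarith
  have hqe : 0 < 1 - ε := by linarith
  induction m with
  | zero =>
    intro S C hC hdis
    refine ⟨fun _ => C, fun I hI hSI hIC => ⟨S, subset_rfl, hSI, hIC, subset_rfl, le_rfl, ?_⟩⟩
    rw [Finset.card_eq_zero] at hC
    simp [hC]
  | succ m ih =>
    intro S C hC hdis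
    by_cases hbad : ∃ v ∈ C, Ex p (C.erase v) (fun R => ind D S (insert v R)) <
        (1 - ε) * Ex p C (ind D S)
    · obtain ⟨v, hv, hlt⟩ := hbad
      have hvS : v ∉ S := Finset.disjoint_left.1 hdis hv
      have hcard : (C.erase v).card = m := by rw [Finset.card_erase_of_mem hv, hC]; rfl
      have hins : insert v (C.erase v) = C := Finset.insert_erase hv
      have hexp : Ex p C (ind D S) = (1 - p) * Ex p (C.erase v) (ind D S) +
          p * Ex p (C.erase v) (fun R => ind D S (insert v R)) := by
        conv_lhs => rw [← hins]
        exact Ex_insert p (by simp) _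
      have heq : ∀ R, ind D S (insert v R) = ind D (insert v S) R := by
        intro R; unfold ind; rw [Finset.insert_union, Finset.union_insert]
      simp only [heq] at hexp hlt
      obtain ⟨f1, hf1⟩ := ih (insert v S) (C.erase v) hcard (by
        rw [Finset.disjoint_insert_right]
        exact ⟨by simp, hdis.mono_left (Finset.erase_subset _ _)⟩)
      obtain ⟨f0, hf0⟩ := ih S (C.erase v) hcard (hdis.mono_left (Finset.erase_subset _ _))
      refine ⟨fun T => if v ∈ T then f1 T else f0 T, fun I hI hSI hIC => ?_⟩
      have hc2 : (1 - p) ^ C.card = (1 - p) ^ (C.erase v).card * (1 - p) := by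
        rw [hC, hcard, pow_succ]
      by_cases hvI : v ∈ I
      · obtain ⟨S', a1, a2, a3, a4, a5, a6⟩ := hf1 I hI (Finset.insert_subset hvI hSI) (by
          intro x hx
          have := hIC hx
          simp only [Finset.mem_union, Finset.mem_insert, Finset.mem_erase] at this ⊢
          tauto)
        have hvS' : v ∈ S' := a1 (Finset.mem_insert_self v S)
        refine ⟨S', (Finset.subset_insert v S).trans a1, a2, ?_, ?_, ?_, ?_⟩
        · simpa only [hvS', if_true] using a3
        · simpa only [hvS', if_true] using a4.trans (Finset.erase_subset _ _)
        · simp only [hvS', if_true]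
          rw [Finset.card_insert_of_notMem hvS, pow_succ] at a5
          have hA : 0 ≤ Ex p (f1 S') (ind D S') := Ex_nonneg h0.le h1.le _ fun R _ => ind_nonneg _ _ _
          have hB : 0 ≤ Ex p C (ind D S) := Ex_nonneg h0.le h1.le _ fun R _ => ind_nonneg _ _ _
          rw [hc2]
          set A := Ex p (f1 S') (ind D S')
          set B := Ex p C (ind D S)
          set B1 := Ex p (C.erase v) (ind D (insert v S))
          set u := (1 - p) ^ (C.erase v).card * (1 - ε) ^ S.card * A with hu
          have hu0 : 0 ≤ u := by positivity
          set w := (1 - p) ^ (f1 S').card * (1 - ε) ^ S'.card with hw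
          have hw0 : 0 < w := by positivity
          have e1 : (1 - p) ^ (C.erase v).card * ((1 - ε) ^ S.card * (1 - ε)) * A = u * (1 - ε) := by
            rw [hu]; ring
          rw [e1] at a5
          have e2 : (1 - p) ^ (C.erase v).card * (1 - p) * (1 - ε) ^ S.card * A = u * (1 - p) := by
            rw [hu]; ring
          rw [e2]
          have k1 : u * (1 - ε) ≤ w * B * (1 - ε) := by
            have := mul_le_mul_of_nonneg_left hlt.le hw0.le
            linarith
          have k2 : u ≤ w * B := le_of_mul_le_mul_right k1 hqe
          nlinarith
        · simpa only [hvS', if_true] using a6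
      · obtain ⟨S', a1, a2, a3, a4, a5, a6⟩ := hf0 I hI hSI (by
          intro x hx
          have := hIC hx
          have hxv : x ≠ v := fun h => hvI (h ▸ hx)
          simp only [Finset.mem_union, Finset.mem_erase] at this ⊢
          tauto)
        have hvS' : v ∉ S' := fun h => hvI (a2 h)
        refine ⟨S', a1, a2, ?_, ?_, ?_, ?_⟩
        · simpa only [hvS', if_false] using a3
        · simpa only [hvS', if_false] using a4.trans (Finset.erase_subset _ _)
        · simp only [hvS', if_false]
          have hB : 0 ≤ Ex p (C.erase v) (ind D (insert v S)) :=
            Ex_nonneg h0.le h1.le _ fun R _ => ind_nonneg _ _ _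
          rw [hc2, hexp]
          set B1 := Ex p (C.erase v) (ind D (insert v S))
          set w := (1 - p) ^ (f0 S').card * (1 - ε) ^ S'.card with hw
          have hw0 : 0 < w := by positivity
          have m1 := mul_le_mul_of_nonneg_left a5 hq.le
          have m2 : 0 ≤ w * (p * B1) := by positivity
          linarith
        · simpa only [hvS', if_false] using a6
    · push Not at hbad
      exact ⟨fun _ => C, fun I hI hSI hIC =>
        ⟨S, subset_rfl, hSI, hIC, subset_rfl, le_rfl, hbad⟩⟩

/-- Container theorem. -/
lemma container {G : Type} [Fintype G] {p ε : ℝ} (h0 : 0 < p) (h1 : p < 1) (he0 : 0 < ε)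
    (he1 : ε < 1) {D : Finset G → Prop} (hD : ∀ A B, A ⊆ B → D B → D A) :
    ∃ f : Finset G → Finset G, ∀ I, D I → ∃ S', S' ⊆ I ∧ I ⊆ S' ∪ f S' ∧
      (1 - p) ^ Fintype.card G ≤ (1 - ε) ^ S'.card ∧
      Real.exp (Real.log (1 - p) * (ε * Fintype.card G)) ≤
        Ex p (f S') (fun R => if D R then 1 else 0) := by
  obtain ⟨f, hf⟩ := container_aux h0 h1 he0 he1 hD _ ∅ (Finset.univ : Finset G) rfl (by simp)
  refine ⟨f, fun I hI => ?_⟩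
  obtain ⟨S', -, a2, a3, -, a5, a6⟩ := hf I hI (by simp) (by simp)
  have hq : 0 < 1 - p := by linarith
  have hqe : 0 < 1 - ε := by linarith
  have hDS : D S' := hD _ _ a2 hI
  have hi1 : ind D S' ∅ = 1 := by simp [ind, hDS]
  have hΦ := Ex_ge_empty h0.le h1.le (f S') (ind_nonneg D S')
  rw [hi1, mul_one] at hΦ
  have hΦ0 : 0 < Ex p (f S') (ind D S') := lt_of_lt_of_le (by positivity) hΦ
  refine ⟨S', a2, a3, ?_, ?_⟩
  · have hle : Ex p (Finset.univ : Finset G) (ind D ∅) ≤ 1 := by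
      rw [← Ex_const p (Finset.univ : Finset G) 1]
      apply Ex_mono h0.le h1.le
      intro R _; unfold ind; split_ifs <;> norm_num
    simp only [Finset.card_empty, pow_zero, mul_one, Finset.card_univ] at a5
    set w := (1 - p) ^ (f S').card with hw
    have hw0 : 0 < w := by positivity
    have k1 : (1 - p) ^ Fintype.card G * w ≤ (1 - ε) ^ S'.card * w := by
      calc (1 - p) ^ Fintype.card G * w ≤ (1 - p) ^ Fintype.card G * Ex p (f S') (ind D S') :=
            mul_le_mul_of_nonneg_left hΦ (by positivity)
        _ ≤ _ := a5
        _ ≤ w * (1 - ε) ^ S'.card * 1 := mul_le_mul_of_nonneg_left hle (by positivity)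
        _ = _ := by ring
    exact le_of_mul_le_mul_right k1 hw0
  · have hent := entropy h0 h1 (f S') (ind D S') (ind_anti hD S')
      (fun R => by unfold ind; split_ifs <;> simp)
    set Φ := Ex p (f S') (ind D S') with hΦd
    have hL : 0 < -Real.log (1 - p) := by
      have := Real.log_neg hq (by linarith); linarith
    have hs : ∑ v ∈ f S', (Φ - Ex p ((f S').erase v) (fun R => ind D S' (insert v R))) ≤
        Fintype.card G * (ε * Φ) := by
      calc _ ≤ ∑ v ∈ f S', ε * Φ := Finset.sum_le_sum fun v hv => by
              have := a6 v hv; linarith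
        _ = (f S').card * (ε * Φ) := by simp
        _ ≤ _ := by
          apply mul_le_mul_of_nonneg_right _ (by positivity)
          exact_mod_cast Finset.card_le_univ _
    have h3 := hent.trans (mul_le_mul_of_nonneg_left hs hL.le)
    simp only [Real.negMulLog] at h3
    have h4 : Φ * (Real.log (1 - p) * (ε * Fintype.card G)) ≤ Φ * Real.log Φ := by linarith
    have h5 := le_of_mul_le_mul_left h4 hΦ0
    have h6 : Real.exp (Real.log (1 - p) * (ε * Fintype.card G)) ≤ Φ := by
      rw [← Real.exp_log hΦ0]; exact Real.exp_le_exp.2 h5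
    refine h6.trans ?_
    apply Ex_mono h0.le h1.le
    intro R _
    unfold ind
    split_ifs with g1 g2
    · exact le_rfl
    · exact absurd (hD _ _ Finset.subset_union_left g1) g2
    · exact zero_le_one
    · exact le_rfl

/-- edges of a relation between two sets -/
noncomputable def eg {V : Type} (E : V → V → Prop) (X Y : Finset V) : Finset (V × V) :=
  (X ×ˢ Y).filter (fun q => E q.1 q.2)

/-- lower-regular dense pair -/
def GoodPair {V : Type} (E : V → V → Prop) (d b : ℝ) (A B : Finset V) : Prop :=
  b ≤ A.card ∧ b ≤ B.card ∧ ∀ X ⊆ A, ∀ Y ⊆ B, d / 4 * A.card ≤ X.card → d / 4 * B.card ≤ Y.card →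
    d / 2 * (X.card * Y.card) ≤ (eg E X Y).card

/-- The graph encoding a cyclic family of relations. -/
def cycGraph {ι V : Type} (nx : ι → ι) (h1 : ∀ i, nx i ≠ i) (E : ι → V → V → Prop) :
    SimpleGraph (ι × V) where
  Adj u w := (w.1 = nx u.1 ∧ E u.1 u.2 w.2) ∨ (u.1 = nx w.1 ∧ E w.1 w.2 u.2)
  symm := ⟨fun _ _ h => h.symm⟩
  loopless := ⟨fun u h => by
    rcases h with h | h <;> exact h1 u.1 h.1.symm⟩

lemma cycGraph_density {ι V : Type} (nx : ι → ι) (h1 : ∀ i, nx i ≠ i)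
    (h2 : ∀ i, nx (nx i) ≠ i) (E : ι → V → V → Prop) (i : ι) (X Y : Finset V) :
    (((cycGraph nx h1 E).edgeDensity (X.map ⟨fun w => (i, w), fun _ _ h => (Prod.mk.inj h).2⟩)
      (Y.map ⟨fun w => (nx i, w), fun _ _ h => (Prod.mk.inj h).2⟩) : ℚ) : ℝ) =
      (eg (E i) X Y).card / (X.card * Y.card) := by
  have hc : ((cycGraph nx h1 E).interedges
      (X.map ⟨fun w => (i, w), fun _ _ h => (Prod.mk.inj h).2⟩)
      (Y.map ⟨fun w => (nx i, w), fun _ _ h => (Prod.mk.inj h).2⟩)).card = (eg (E i) X Y).card := by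
    symm
    apply Finset.card_bij (fun q _ => (((i, q.1), (nx i, q.2)) : (ι × V) × (ι × V)))
    · intro q hq
      simp only [eg, Finset.mem_filter, Finset.mem_product] at hq
      rw [SimpleGraph.mem_interedges_iff]
      refine ⟨?_, ?_, ?_⟩
      · exact Finset.mem_map.2 ⟨q.1, hq.1.1, rfl⟩
      · exact Finset.mem_map.2 ⟨q.2, hq.1.2, rfl⟩
      · exact Or.inl ⟨rfl, hq.2⟩
    · intro q _ q' _ h
      simp only [Prod.mk.injEq, true_and] at h
      exact Prod.ext h.1 h.2
    · rintro ⟨u, w⟩ h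
      rw [SimpleGraph.mem_interedges_iff] at h
      simp only [Finset.mem_map, Function.Embedding.coeFn_mk] at h
      obtain ⟨⟨a, ha, rfl⟩, ⟨b, hb, rfl⟩, h⟩ := h
      refine ⟨(a, b), ?_, rfl⟩
      simp only [eg, Finset.mem_filter, Finset.mem_product]
      refine ⟨⟨ha, hb⟩, ?_⟩
      rcases h with h | h
      · exact h.2
      · exact absurd h.1.symm (h2 i)
  rw [SimpleGraph.edgeDensity_def, hc]
  simp

set_option maxHeartbeats 1000000 in
lemma reg (ι : Type) [Fintype ι] {d : ℝ} (hd : 0 < d) (hd1 : d ≤ 1) :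
    ∃ β : ℝ, 0 < β ∧ ∃ n0 : ℕ, ∀ (V : Type) [Fintype V], n0 ≤ Fintype.card V →
      ∀ (nx : ι → ι) (_ : ∀ i, nx i ≠ i) (_ : ∀ i, nx (nx i) ≠ i) (E : ι → V → V → Prop),
      ∃ pt : ι → V → Finset V, ∀ i,
        (((Finset.univ : Finset (V × V)).filter (fun q => E i q.1 q.2 ∧
          ¬ GoodPair (E i) d (β * Fintype.card V) (pt i q.1) (pt (nx i) q.2))).card : ℝ) ≤
        5 * (Fintype.card ι : ℝ) ^ 2 * d * (Fintype.card V : ℝ) ^ 2 := by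
  set ε : ℝ := d ^ 2 / 4 with hε
  have hε0 : 0 < ε := by positivity
  have hεd : ε ≤ d / 4 := by rw [hε]; nlinarith
  set l : ℕ := ⌈4 / ε⌉₊ with hl
  set B : ℕ := SzemerediRegularity.bound ε l with hB
  have hB0 : 0 < B := SzemerediRegularity.bound_pos _ _
  have hl0 : 0 < l := Nat.ceil_pos.2 (by positivity)
  refine ⟨d / (2 * B), by positivity, l, ?_⟩
  intro V _ hV nx h1 h2 E
  rcases isEmpty_or_nonempty ι with hemp | hne
  · exact ⟨fun i => isEmptyElim i, fun i => isEmptyElim i⟩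
  set K := Fintype.card ι with hK
  set n := Fintype.card V with hn
  have hK1 : 1 ≤ K := Fintype.card_pos
  have hN : Fintype.card (ι × V) = K * n := by rw [Fintype.card_prod]
  have hlN : l ≤ Fintype.card (ι × V) := by rw [hN]; nlinarith
  set Γ := cycGraph nx h1 E with hΓ
  obtain ⟨P, hP1, hP2, hP3, hP4⟩ := szemeredi_regularity Γ hε0 hlN
  have hn0 : 0 < n := lt_of_lt_of_le hl0 hV
  have hAne : (Finset.univ : Finset (ι × V)).Nonempty := by
    rw [← Finset.card_pos, Finset.card_univ, hN]; positivity
  set sl : ι → Finset (ι × V) → Finset V := fun i U => Finset.univ.filter (fun w => (i, w) ∈ U) with hsl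
  set pt : ι → V → Finset V := fun i a => sl i (P.part (i, a)) with hpt
  refine ⟨pt, fun i => ?_⟩
  have hpart : ∀ u, P.part u ∈ P.parts := fun u => P.part_mem.2 (Finset.mem_univ u)
  have hself : ∀ u, u ∈ P.part u := fun u => P.mem_part_self.2 (Finset.mem_univ u)
  have hpsize : ∀ U ∈ P.parts, (n : ℝ) / (2 * B) ≤ U.card := by
    intro U hU
    have g1 := hP1.average_le_card_part hU
    rw [Finset.card_univ, hN] at g1
    have hM0 : 0 < P.parts.card := Finset.card_pos.2 ⟨U, hU⟩
    have hUpos : 0 < U.card := Finset.card_pos.2 (P.nonempty_of_mem_parts hU)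
    have g2 : K * n < P.parts.card * (U.card + 1) := by
      have := Nat.lt_mul_div_succ (K * n) hM0
      exact this.trans_le (Nat.mul_le_mul_left _ (Nat.succ_le_succ g1))
    have g3 : n ≤ 2 * B * U.card := by
      have : n ≤ K * n := Nat.le_mul_of_pos_left _ hK1
      have g4 : P.parts.card * (U.card + 1) ≤ B * (2 * U.card) :=
        Nat.mul_le_mul hP3 (by omega)
      nlinarith
    rw [div_le_iff₀ (by positivity)]
    have : (n : ℝ) ≤ 2 * B * U.card := by exact_mod_cast g3
    linarith
  -- slices sum
  have hslsum : ∀ j, ∑ U ∈ P.parts, (sl j U).card = n := by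
    intro j
    have := Finset.card_eq_sum_card_fiberwise (s := (Finset.univ : Finset V)) (t := P.parts)
      (f := fun w => P.part (j, w)) (fun w _ => hpart _)
    rw [hn, ← Finset.card_univ, this]
    apply Finset.sum_congr rfl
    intro U hU
    congr 1
    ext w
    simp only [hsl, Finset.mem_filter, Finset.mem_univ, true_and]
    exact (P.part_eq_iff_mem hU).symm
  -- vertices with small slices
  have hsmall : ∀ j, ((Finset.univ.filter (fun a : V => ((pt j a).card : ℝ) <
      d * (P.part (j, a)).card)).card : ℝ) ≤ d * (K * n) := by
    intro j
    have := Finset.card_eq_sum_card_fiberwise (t := P.parts)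
      (s := (Finset.univ.filter (fun a : V => ((pt j a).card : ℝ) < d * (P.part (j, a)).card)))
      (f := fun w => P.part (j, w)) (fun w _ => hpart _)
    rw [this]
    push_cast
    have hsum : ∑ U ∈ P.parts, (U.card : ℝ) = K * n := by
      have := P.sum_card_parts
      rw [Finset.card_univ, hN] at this
      exact_mod_cast this
    rw [← hsum, Finset.mul_sum]
    apply Finset.sum_le_sum
    intro U hU
    by_cases hU2 : ((sl j U).card : ℝ) < d * U.card
    · refine le_trans ?_ hU2.le
      norm_cast
      apply Finset.card_le_card
      intro w hw
      rw [Finset.mem_filter] at hw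
      simp only [hsl, Finset.mem_filter, Finset.mem_univ, true_and]
      exact (P.part_eq_iff_mem hU).1 hw.2
    · rw [Finset.card_eq_zero.2, Nat.cast_zero]
      · positivity
      · rw [Finset.filter_eq_empty_iff]
        intro w hw hw2
        rw [Finset.mem_filter] at hw
        apply hU2
        have := hw.2
        simp only [hpt] at this
        rwa [hw2] at this
  set emb : ι → V → ι × V := fun j w => (j, w) with hemb
  -- the five bad sets
  set S1 : Finset (V × V) := Finset.univ.filter (fun q => P.part (i, q.1) = P.part (nx i, q.2)) with hS1
  set S2 : Finset (V × V) := Finset.univ.filter (fun q =>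
    (P.part (i, q.1), P.part (nx i, q.2)) ∈ P.nonUniforms Γ ε) with hS2
  set S3 : Finset (V × V) := Finset.univ.filter (fun a : V => ((pt i a).card : ℝ) <
      d * (P.part (i, a)).card) ×ˢ Finset.univ with hS3
  set S4 : Finset (V × V) := Finset.univ ×ˢ Finset.univ.filter (fun a : V => ((pt (nx i) a).card : ℝ) <
      d * (P.part (nx i, a)).card) with hS4
  set S5 : Finset (V × V) := Finset.univ.filter (fun q => E i q.1 q.2 ∧
    ((eg (E i) (pt i q.1) (pt (nx i) q.2)).card : ℝ) <
      d * ((pt i q.1).card * (pt (nx i) q.2).card)) with hS5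
  have hprodinj : Function.Injective
      (fun q : V × V => (((i, q.1), (nx i, q.2)) : (ι × V) × (ι × V))) := by
    intro q q' h
    simp only [Prod.mk.injEq, true_and] at h
    exact Prod.ext h.1 h.2
  have c1 : (S1.card : ℝ) ≤ ε / 2 * (K * n) ^ 2 := by
    have hb := hP1.card_biUnion_offDiag_le hε0 (by
      calc (4 : ℝ) / ε ≤ l := Nat.le_ceil _
        _ ≤ _ := by exact_mod_cast hP2)
    rw [Finset.card_univ, hN] at hb
    push_cast at hb
    refine le_trans ?_ hb
    norm_cast
    apply Finset.card_le_card_of_injOn _ _ hprodinj.injOn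
    intro q hq
    simp only [hS1, Finset.coe_filter, Finset.mem_univ, true_and, Set.mem_ofPred_eq] at hq
    simp only [Finset.coe_biUnion, Set.mem_iUnion, Finset.mem_coe, Finset.mem_offDiag]
    refine ⟨P.part (i, q.1), hpart _, hself _, hq ▸ hself _, ?_⟩
    intro h
    exact h1 i (Prod.mk.inj h).1.symm
  have c2 : (S2.card : ℝ) ≤ 4 * ε * (K * n) ^ 2 := by
    have hb := (hP1.sum_nonUniforms_lt hAne hε0 hP4).le
    rw [Finset.card_univ, hN] at hb
    push_cast at hb
    refine le_trans ?_ hb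
    norm_cast
    apply Finset.card_le_card_of_injOn _ _ hprodinj.injOn
    intro q hq
    simp only [hS2, Finset.coe_filter, Finset.mem_univ, true_and, Set.mem_ofPred_eq] at hq
    rw [Finset.mem_coe, Finset.mem_biUnion]
    exact ⟨_, hq, Finset.mem_product.2 ⟨hself _, hself _⟩⟩
  have c3 : (S3.card : ℝ) ≤ d * (K * n) * n := by
    rw [hS3, Finset.card_product, Finset.card_univ]
    push_cast
    exact mul_le_mul_of_nonneg_right (hsmall i) (by positivity)
  have c4 : (S4.card : ℝ) ≤ d * (K * n) * n := by
    rw [hS4, Finset.card_product, Finset.card_univ]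
    push_cast
    rw [mul_comm]
    exact mul_le_mul_of_nonneg_right (hsmall (nx i)) (by positivity)
  have c5 : (S5.card : ℝ) ≤ d * n ^ 2 := by
    have := Finset.card_eq_sum_card_fiberwise (s := S5) (t := P.parts ×ˢ P.parts)
      (f := fun q => (P.part (i, q.1), P.part (nx i, q.2)))
      (fun q _ => Finset.mem_coe.2 (Finset.mem_product.2 ⟨hpart _, hpart _⟩))
    rw [this]
    push_cast
    have hs2 : (n : ℝ) ^ 2 = ∑ W ∈ P.parts ×ˢ P.parts, ((sl i W.1).card * (sl (nx i) W.2).card : ℝ) := by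
      rw [Finset.sum_product]
      simp only
      rw [← Finset.sum_mul_sum]
      have e1 := hslsum i
      have e2 := hslsum (nx i)
      rw [sq]
      congr 1
      · exact_mod_cast e1.symm
      · exact_mod_cast e2.symm
    rw [hs2, Finset.mul_sum]
    apply Finset.sum_le_sum
    rintro ⟨U, W⟩ hUW
    rw [Finset.mem_product] at hUW
    simp only
    by_cases hU2 : ((eg (E i) (sl i U) (sl (nx i) W)).card : ℝ) < d * ((sl i U).card * (sl (nx i) W).card)
    · refine le_trans ?_ hU2.le
      norm_cast
      apply Finset.card_le_card
      intro q hq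
      simp only [hS5, Finset.mem_filter, Finset.mem_univ, true_and, Prod.mk.injEq] at hq
      simp only [eg, hsl, Finset.mem_filter, Finset.mem_univ, true_and, Finset.mem_product]
      exact ⟨⟨(P.part_eq_iff_mem hUW.1).1 hq.2.1, (P.part_eq_iff_mem hUW.2).1 hq.2.2⟩, hq.1.1⟩
    · rw [Finset.card_eq_zero.2, Nat.cast_zero]
      · positivity
      · rw [Finset.filter_eq_empty_iff]
        intro q hq hq2
        simp only [hS5, Finset.mem_filter, Finset.mem_univ, true_and] at hq
        simp only [Prod.mk.injEq] at hq2
        apply hU2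
        have := hq.2
        simp only [hpt] at this
        rwa [hq2.1, hq2.2] at this
  have hsub : (Finset.univ : Finset (V × V)).filter (fun q => E i q.1 q.2 ∧
          ¬ GoodPair (E i) d (d / (2 * B) * n) (pt i q.1) (pt (nx i) q.2)) ⊆
        S1 ∪ (S2 ∪ (S3 ∪ (S4 ∪ S5))) := by
    rintro ⟨a, b⟩ hq
    simp only [Finset.mem_filter, Finset.mem_univ, true_and] at hq
    obtain ⟨hE, hbad⟩ := hq
    by_contra hcon
    simp only [Finset.mem_union, not_or] at hcon
    obtain ⟨n1, n2, n3, n4, n5⟩ := hcon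
    apply hbad
    simp only [hS1, Finset.mem_filter, Finset.mem_univ, true_and] at n1
    simp only [hS2, Finset.mem_filter, Finset.mem_univ, true_and, Finpartition.mk_mem_nonUniforms,
      hpart, not_and, not_not] at n2
    simp only [hS3, Finset.mem_product, Finset.mem_filter, Finset.mem_univ, true_and, and_true,
      not_lt] at n3
    simp only [hS4, Finset.mem_product, Finset.mem_filter, Finset.mem_univ, true_and, and_true,
      not_lt] at n4
    simp only [hS5, Finset.mem_filter, Finset.mem_univ, true_and, hE, not_lt] at n5
    have hunif := n2 n1
    set U := P.part (i, a) with hU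
    set W := P.part (nx i, b) with hW
    have sU := hpsize U (hpart _)
    have sW := hpsize W (hpart _)
    have e0 : d / (2 * B) * n = d * (n / (2 * B)) := by ring
    have bU : d / (2 * B) * n ≤ (pt i a).card := by
      rw [e0]; exact (mul_le_mul_of_nonneg_left sU hd.le).trans n3
    have bW : d / (2 * B) * n ≤ (pt (nx i) b).card := by
      rw [e0]; exact (mul_le_mul_of_nonneg_left sW hd.le).trans n4
    have hbpos : 0 < d / (2 * B) * n := by positivity
    refine ⟨bU, bW, ?_⟩
    have hmapsub : ∀ (j : ι) (u : ι × V) (X : Finset V), X ⊆ sl j (P.part u) →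
        X.map ⟨fun w => (j, w), fun _ _ h => (Prod.mk.inj h).2⟩ ⊆ P.part u := by
      intro j u X hX z hz
      simp only [Finset.mem_map, Function.Embedding.coeFn_mk] at hz
      obtain ⟨w, hw, rfl⟩ := hz
      have := hX hw
      change (j, w) ∈ P.part u
      simpa [hsl] using this
    have big : ∀ (j : ι) (u : ι × V) (X : Finset V), d * (P.part u).card ≤ (sl j (P.part u)).card →
        d / 4 * (sl j (P.part u)).card ≤ X.card →
        ((P.part u).card : ℝ) * ε ≤
          (X.map ⟨fun w => (j, w), fun _ _ h => (Prod.mk.inj h).2⟩ : Finset (ι × V)).card := by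
      intro j u X g1 g2
      rw [Finset.card_map]
      refine le_trans ?_ g2
      rw [hε]
      nlinarith
    have key : ∀ X ⊆ pt i a, ∀ Y ⊆ pt (nx i) b, d / 4 * (pt i a).card ≤ X.card →
        d / 4 * (pt (nx i) b).card ≤ Y.card →
        |((eg (E i) X Y).card / (X.card * Y.card) : ℝ) - ((Γ.edgeDensity U W : ℚ) : ℝ)| < ε := by
      intro X hX Y hY hX2 hY2
      rw [← cycGraph_density nx h1 h2 E i X Y]
      exact hunif (hmapsub i _ X hX) (hmapsub (nx i) _ Y hY) (big i _ X n3 hX2) (big (nx i) _ Y n4 hY2)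
    intro X hX Y hY hX2 hY2
    have k1 := key X hX Y hY hX2 hY2
    have k2 := key _ subset_rfl _ subset_rfl (mul_le_of_le_one_left (Nat.cast_nonneg _) (by linarith))
      (mul_le_of_le_one_left (Nat.cast_nonneg _) (by linarith))
    have pa : (0:ℝ) < (pt i a).card := hbpos.trans_le bU
    have pb : (0:ℝ) < (pt (nx i) b).card := hbpos.trans_le bW
    have pX : (0:ℝ) < X.card := lt_of_lt_of_le (by positivity) hX2
    have pY : (0:ℝ) < Y.card := lt_of_lt_of_le (by positivity) hY2
    have k3 : d ≤ (eg (E i) (pt i a) (pt (nx i) b)).card / ((pt i a).card * (pt (nx i) b).card) := by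
      rw [le_div_iff₀ (by positivity)]; exact n5
    rw [abs_lt] at k1 k2
    have k4 : d / 2 ≤ (eg (E i) X Y).card / (X.card * Y.card) := by linarith
    rwa [le_div_iff₀ (by positivity)] at k4
  have hcard : (((Finset.univ : Finset (V × V)).filter (fun q => E i q.1 q.2 ∧
          ¬ GoodPair (E i) d (d / (2 * B) * n) (pt i q.1) (pt (nx i) q.2))).card : ℝ) ≤
      S1.card + (S2.card + (S3.card + (S4.card + S5.card))) := by
    have h0 : (S1 ∪ (S2 ∪ (S3 ∪ (S4 ∪ S5)))).card ≤ S1.card + (S2.card + (S3.card + (S4.card + S5.card))) := by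
      refine (Finset.card_union_le _ _).trans (Nat.add_le_add_left ?_ _)
      refine (Finset.card_union_le _ _).trans (Nat.add_le_add_left ?_ _)
      refine (Finset.card_union_le _ _).trans (Nat.add_le_add_left ?_ _)
      exact Finset.card_union_le _ _
    exact_mod_cast (Nat.cast_le (α := ℝ)).2 ((Finset.card_le_card hsub).trans h0)
  refine hcard.trans ?_
  have hKr : (1:ℝ) ≤ K := by exact_mod_cast hK1
  have f1 : ε / 2 * (K * n) ^ 2 + 4 * ε * (K * n) ^ 2 ≤ 9 / 8 * d * (K * n : ℝ) ^ 2 := by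
    have : ε * (K * n : ℝ) ^ 2 ≤ d / 4 * (K * n : ℝ) ^ 2 :=
      mul_le_mul_of_nonneg_right hεd (by positivity)
    linarith
  have f2 : d * (K * n) * n ≤ d * (K * n : ℝ) ^ 2 := by
    have : (0:ℝ) ≤ d * (n:ℝ)^2 * K := by positivity
    nlinarith
  have f3 : d * n ^ 2 ≤ d * (K * n : ℝ) ^ 2 := by
    have h : (1:ℝ) ≤ (K:ℝ) ^ 2 := by nlinarith
    have : (0:ℝ) ≤ d * (n:ℝ)^2 := by positivity
    nlinarith
  have f4 : (0:ℝ) ≤ d * (K * n : ℝ) ^ 2 := by positivity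
  nlinarith

/-- number of ways to write `g` as an ordered product of powers of elements of `T` -/
noncomputable def cnt {G : Type} [Group G] (T : Finset G) (r : ℕ → ℕ) : ℕ → G → ℝ
  | 0, g => if g = 1 then 1 else 0
  | (j + 1), g => ∑ x ∈ T, cnt T r j (g * (x ^ r j)⁻¹)

lemma cnt_nonneg {G : Type} [Group G] (T : Finset G) (r : ℕ → ℕ) (j : ℕ) (g : G) :
    0 ≤ cnt T r j g := by
  induction j generalizing g with
  | zero => unfold cnt; split_ifs <;> norm_num
  | succ j ih => unfold cnt; exact Finset.sum_nonneg fun x _ => ih _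

lemma cnt_step {G : Type} [Group G] (T : Finset G) (r : ℕ → ℕ) (j : ℕ) (a b : G) (X : Finset G)
    (M : ℝ) (hM : ∀ v ∈ X, M ≤ cnt T r j (a⁻¹ * v)) (E : G → G → Prop)
    (hE : ∀ v w, E v w → ∃ x ∈ T, x ^ r j = v⁻¹ * w) :
    ((X.filter (fun v => E v b)).card : ℝ) * M ≤ cnt T r (j + 1) (a⁻¹ * b) := by
  set Y := X.filter (fun v => E v b) with hY
  have hch : ∀ v ∈ Y, ∃ x ∈ T, x ^ r j = v⁻¹ * b := fun v hv => hE _ _ (Finset.mem_filter.1 hv).2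
  choose! f hf1 hf2 using hch
  have hinj : Set.InjOn f Y := by
    intro v hv w hw h
    have h1 := hf2 v hv
    have h2 := hf2 w hw
    rw [h, h2] at h1
    exact (inv_injective (mul_right_cancel h1)).symm
  calc (Y.card : ℝ) * M = ∑ v ∈ Y, M := by simp
    _ ≤ ∑ v ∈ Y, cnt T r j (a⁻¹ * b * ((f v) ^ r j)⁻¹) := by
        apply Finset.sum_le_sum
        intro v hv
        rw [hf2 v hv]
        have : a⁻¹ * b * (v⁻¹ * b)⁻¹ = a⁻¹ * v := by group
        rw [this]
        exact hM v (Finset.mem_filter.1 hv).1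
    _ = ∑ x ∈ Y.image f, cnt T r j (a⁻¹ * b * (x ^ r j)⁻¹) := by
        rw [Finset.sum_image hinj]
    _ ≤ ∑ x ∈ T, cnt T r j (a⁻¹ * b * (x ^ r j)⁻¹) := by
        apply Finset.sum_le_sum_of_subset_of_nonneg
        · intro x hx
          obtain ⟨v, hv, rfl⟩ := Finset.mem_image.1 hx
          exact hf1 v hv
        · intro x _ _; exact cnt_nonneg _ _ _ _
    _ = _ := by rw [cnt]

lemma eg_card_right {V : Type} (E : V → V → Prop) (X Y : Finset V) :
    (eg E X Y).card = ∑ w ∈ Y, (X.filter (fun v => E v w)).card := by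
  unfold eg
  rw [Finset.card_filter, Finset.sum_product_right]
  simp only [Finset.card_filter]

lemma eg_card_left {V : Type} (E : V → V → Prop) (X Y : Finset V) :
    (eg E X Y).card = ∑ v ∈ X, (Y.filter (fun w => E v w)).card := by
  unfold eg
  rw [Finset.card_filter, Finset.sum_product]
  simp only [Finset.card_filter]

lemma bad_right {V : Type} {E : V → V → Prop} {d b : ℝ} {A B : Finset V} (hd : 0 < d) (hb : 0 < b)
    (h : GoodPair E d b A B) (X : Finset V) (hX : X ⊆ A) (hX2 : d / 4 * A.card ≤ X.card) :
    ((B.filter (fun w => ((X.filter (fun v => E v w)).card : ℝ) < d / 2 * X.card)).card : ℝ) <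
      d / 4 * B.card := by
  set Y := B.filter (fun w => ((X.filter (fun v => E v w)).card : ℝ) < d / 2 * X.card) with hY
  by_contra hcon
  push Not at hcon
  have h1 := h.2.2 X hX Y (Finset.filter_subset _ _) hX2 hcon
  have hB : (0:ℝ) < B.card := hb.trans_le h.2.1
  have hYp : (0:ℝ) < Y.card := lt_of_lt_of_le (by positivity) hcon
  have hYne : Y.Nonempty := Finset.card_pos.1 (by exact_mod_cast hYp)
  rw [eg_card_right] at h1
  push_cast at h1
  have h2 : ∑ w ∈ Y, ((X.filter (fun v => E v w)).card : ℝ) < ∑ w ∈ Y, d / 2 * X.card :=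
    Finset.sum_lt_sum_of_nonempty hYne (fun w hw => (Finset.mem_filter.1 hw).2)
  rw [Finset.sum_const, nsmul_eq_mul] at h2
  nlinarith

lemma bad_left {V : Type} {E : V → V → Prop} {d b : ℝ} {A B : Finset V} (hd : 0 < d) (hb : 0 < b)
    (h : GoodPair E d b A B) (Y : Finset V) (hX : Y ⊆ B) (hX2 : d / 4 * B.card ≤ Y.card) :
    ((A.filter (fun v => ((Y.filter (fun w => E v w)).card : ℝ) < d / 2 * Y.card)).card : ℝ) <
      d / 4 * A.card := by
  set X := A.filter (fun v => ((Y.filter (fun w => E v w)).card : ℝ) < d / 2 * Y.card) with hY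
  by_contra hcon
  push Not at hcon
  have h1 := h.2.2 X (Finset.filter_subset _ _) Y hX hcon hX2
  have hB : (0:ℝ) < A.card := hb.trans_le h.1
  have hYp : (0:ℝ) < X.card := lt_of_lt_of_le (by positivity) hcon
  have hYne : X.Nonempty := Finset.card_pos.1 (by exact_mod_cast hYp)
  rw [eg_card_left] at h1
  push_cast at h1
  have h2 : ∑ w ∈ X, ((Y.filter (fun v => E w v)).card : ℝ) < ∑ w ∈ X, d / 2 * Y.card :=
    Finset.sum_lt_sum_of_nonempty hYne (fun w hw => (Finset.mem_filter.1 hw).2)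
  rw [Finset.sum_const, nsmul_eq_mul] at h2
  nlinarith

lemma path_count {G : Type} [Group G] (T : Finset G) (r : ℕ → ℕ) (m : ℕ) {d b : ℝ} (hd : 0 < d)
    (hd1 : d ≤ 1) (hb : 0 < b) (A : ℕ → Finset G) (hA : A (m + 3) = A 0)
    (E : ℕ → G → G → Prop) (hE : ∀ j v w, E j v w → ∃ x ∈ T, x ^ r j = v⁻¹ * w)
    (hgood : ∀ j < m + 3, GoodPair (E j) d b (A j) (A (j + 1))) :
    d / 4 * b * (d / 2 * (d / 4 * b)) ^ (m + 1) ≤ cnt T r (m + 3) 1 := by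
  have hAb : ∀ j < m + 3, b ≤ (A j).card := fun j hj => (hgood j hj).1
  have o1 := bad_left hd hb (hgood 0 (by omega)) (A 1) subset_rfl
    (mul_le_of_le_one_left (Nat.cast_nonneg _) (by linarith))
  have o2 := bad_right hd hb (hgood (m + 2) (by omega)) (A (m + 2)) subset_rfl
    (mul_le_of_le_one_left (Nat.cast_nonneg _) (by linarith))
  rw [show m + 2 + 1 = m + 3 by ring, hA] at o2
  obtain ⟨a, ha, ha1, ha2⟩ : ∃ a ∈ A 0,
      d / 2 * (A 1).card ≤ (((A 1).filter (fun w => E 0 a w)).card : ℝ) ∧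
      d / 2 * (A (m + 2)).card ≤ (((A (m + 2)).filter (fun w => E (m + 2) w a)).card : ℝ) := by
    by_contra hcon
    push Not at hcon
    have hsub : A 0 ⊆ (A 0).filter (fun v => (((A 1).filter (fun w => E 0 v w)).card : ℝ) < d / 2 * (A 1).card) ∪
        (A 0).filter (fun w => (((A (m + 2)).filter (fun v => E (m + 2) v w)).card : ℝ) < d / 2 * (A (m + 2)).card) := by
      intro a ha
      rw [Finset.mem_union, Finset.mem_filter, Finset.mem_filter]
      by_cases h : (((A 1).filter (fun w => E 0 a w)).card : ℝ) < d / 2 * (A 1).card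
      · exact Or.inl ⟨ha, h⟩
      · exact Or.inr ⟨ha, hcon a ha (not_lt.1 h)⟩
    have hc := (Finset.card_le_card hsub).trans (Finset.card_union_le _ _)
    have hc' : ((A 0).card : ℝ) ≤ _ := Nat.cast_le.2 hc
    rw [Nat.cast_add] at hc'
    have h0 := hAb 0 (by omega)
    have : ((A 0).card : ℝ) < d / 4 * (A 0).card + d / 4 * (A 0).card := lt_of_le_of_lt hc' (add_lt_add o1 o2)
    nlinarith
  set q := d / 2 * (d / 4 * b) with hq
  have hq0 : 0 < q := by positivity
  have claim : ∀ i, i + 1 < m + 3 →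
      d / 4 * (A (i + 1)).card ≤
        (((A (i + 1)).filter (fun w => q ^ i ≤ cnt T r (i + 1) (a⁻¹ * w))).card : ℝ) ∧
      (1 ≤ i → (1 - d / 4) * (A (i + 1)).card ≤
        (((A (i + 1)).filter (fun w => q ^ i ≤ cnt T r (i + 1) (a⁻¹ * w))).card : ℝ)) := by
    intro i
    induction i with
    | zero =>
      intro _
      refine ⟨?_, fun h => by omega⟩
      calc d / 4 * ((A (0 + 1)).card : ℝ) ≤ d / 2 * (A 1).card := by
            apply mul_le_mul_of_nonneg_right _ (Nat.cast_nonneg _); linarith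
        _ ≤ _ := ha1
        _ ≤ _ := by
          norm_cast
          apply Finset.card_le_card
          intro w hw
          rw [Finset.mem_filter] at hw ⊢
          refine ⟨hw.1, ?_⟩
          have := cnt_step T r 0 a w {a} 1 (by
            intro v hv
            rw [Finset.mem_singleton] at hv
            subst hv
            simp [cnt]) (E 0) (hE 0)
          rw [Finset.filter_singleton, if_pos hw.2] at this
          simpa using this
    | succ i ih =>
      intro hi
      obtain ⟨h1, -⟩ := ih (by omega)
      set X := (A (i + 1)).filter (fun w => q ^ i ≤ cnt T r (i + 1) (a⁻¹ * w)) with hX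
      have hbad := bad_right hd hb (hgood (i + 1) (by omega)) X (Finset.filter_subset _ _) h1
      have hb2 := hAb (i + 1) (by omega)
      have key : (1 - d / 4) * ((A (i + 1 + 1)).card : ℝ) ≤
        (((A (i + 1 + 1)).filter (fun w => q ^ (i + 1) ≤ cnt T r (i + 1 + 1) (a⁻¹ * w))).card : ℝ) := by
        set Bd := (A (i + 1 + 1)).filter (fun w => ((X.filter (fun v => E (i + 1) v w)).card : ℝ) < d / 2 * X.card) with hBd
        have hsub : A (i + 1 + 1) ⊆ Bd ∪ (A (i + 1 + 1)).filter (fun w => q ^ (i + 1) ≤ cnt T r (i + 1 + 1) (a⁻¹ * w)) := by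
          intro w hw
          rw [Finset.mem_union, Finset.mem_filter, Finset.mem_filter]
          by_cases h : ((X.filter (fun v => E (i + 1) v w)).card : ℝ) < d / 2 * X.card
          · exact Or.inl ⟨hw, h⟩
          · refine Or.inr ⟨hw, ?_⟩
            push Not at h
            have := cnt_step T r (i + 1) a w X (q ^ i) (fun v hv => (Finset.mem_filter.1 hv).2) (E (i + 1)) (hE _)
            refine le_trans ?_ this
            rw [pow_succ, mul_comm]
            apply mul_le_mul_of_nonneg_right _ (by positivity)
            refine le_trans ?_ h
            rw [hq]
            apply mul_le_mul_of_nonneg_left _ (by positivity)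
            refine le_trans ?_ h1
            exact mul_le_mul_of_nonneg_left hb2 (by positivity)
        have hc := (Finset.card_le_card hsub).trans (Finset.card_union_le _ _)
        have hc' : ((A (i + 1 + 1)).card : ℝ) ≤ _ := Nat.cast_le.2 hc
        rw [Nat.cast_add] at hc'
        have hbad' : (Bd.card : ℝ) < d / 4 * (A (i + 1 + 1)).card := hbad
        linarith
      refine ⟨le_trans ?_ key, fun _ => key⟩
      apply mul_le_mul_of_nonneg_right _ (Nat.cast_nonneg _)
      linarith
  obtain ⟨-, hX⟩ := claim (m + 1) (by omega)
  have hX := hX (by omega)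
  rw [show m + 1 + 1 = m + 2 by ring] at hX
  set X := (A (m + 2)).filter (fun w => q ^ (m + 1) ≤ cnt T r (m + 2) (a⁻¹ * w)) with hXd
  have hfin := cnt_step T r (m + 2) a a X (q ^ (m + 1)) (fun v hv => (Finset.mem_filter.1 hv).2) (E (m + 2)) (hE _)
  rw [inv_mul_cancel] at hfin
  refine le_trans ?_ hfin
  apply mul_le_mul_of_nonneg_right _ (by positivity)
  have hsub : (A (m + 2)).filter (fun w => E (m + 2) w a) ⊆
      X.filter (fun v => E (m + 2) v a) ∪ (A (m + 2) \ X) := by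
    intro w hw
    rw [Finset.mem_filter] at hw
    rw [Finset.mem_union, Finset.mem_filter, Finset.mem_sdiff]
    by_cases h : w ∈ X
    · exact Or.inl ⟨h, hw.2⟩
    · exact Or.inr ⟨hw.1, h⟩
  have hc := (Finset.card_le_card hsub).trans (Finset.card_union_le _ _)
  have hc' : _ ≤ _ := (Nat.cast_le (α := ℝ)).2 hc
  have hs : ((A (m + 2) \ X).card : ℝ) = (A (m + 2)).card - X.card := by
    rw [Finset.card_sdiff_of_subset (Finset.filter_subset _ _), Nat.cast_sub (Finset.card_le_card (Finset.filter_subset _ _))]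
  rw [Nat.cast_add, hs] at hc'
  have hb2 := hAb (m + 2) (by omega)
  have : d / 4 * b ≤ d / 4 * (A (m + 2)).card := mul_le_mul_of_nonneg_left hb2 (by positivity)
  linarith

lemma cnt_eq {G : Type} [Fintype G] [Group G] (T : Finset G) (r : ℕ → ℕ) (k : ℕ) (g : G) :
    cnt T r k g = (((Finset.univ : Finset (Fin k → G)).filter (fun x => (∀ j, x j ∈ T) ∧
      ((List.finRange k).map (fun j : Fin k => x j ^ r j)).prod = g)).card : ℝ) := by
  induction k generalizing g with
  | zero =>
    by_cases h : g = 1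
    · subst h; simp [cnt]
    · simp [cnt, h, eq_comm]
  | succ k ih =>
    rw [cnt]
    simp_rw [ih]
    rw [Finset.card_filter]
    push_cast
    rw [← (Fin.snocEquiv (fun _ : Fin (k + 1) => G)).sum_comp, Fintype.sum_prod_type]
    rw [← Finset.sum_subset (Finset.subset_univ T)]
    · apply Finset.sum_congr rfl
      intro y hy
      rw [Finset.card_filter]
      push_cast
      apply Finset.sum_congr rfl
      intro x _
      congr 1
      simp only [Fin.snocEquiv, Equiv.coe_fn_mk, eq_iff_iff]
      rw [List.finRange_succ_last, List.map_append, List.prod_append, Fin.forall_fin_succ']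
      simp [List.map_map, Function.comp_def, hy, eq_mul_inv_iff_mul_eq]
    · intro y _ hy
      apply Finset.sum_eq_zero
      intro x _
      rw [if_neg]
      rintro ⟨h, -⟩
      apply hy
      have := h (Fin.last k)
      simpa [Fin.snocEquiv] using this

set_option maxHeartbeats 1000000 in
lemma supersat (m : ℕ) {δ : ℝ} (hδ : 0 < δ) : ∃ c : ℝ, 0 < c ∧ ∃ n0 : ℕ,
    ∀ (G : Type) [Fintype G] [Group G], n0 ≤ Fintype.card G → ∀ (r : Fin (m + 3) → ℕ),
      (∀ j, Nat.Coprime (r j) (Fintype.card G)) → Monoid.exponent G ∣ ∑ j, r j →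
      ∀ T : Finset G, δ * Fintype.card G ≤ T.card →
      c * (Fintype.card G : ℝ) ^ (m + 2) ≤ (((Finset.univ : Finset (Fin (m + 3) → G)).filter
        (fun x => (∀ j, x j ∈ T) ∧ ((List.finRange (m + 3)).map (fun j => x j ^ r j)).prod = 1)).card : ℝ) := by
  set K : ℝ := (m : ℝ) + 3 with hK
  have hK0 : 0 < K := by positivity
  set d : ℝ := min 1 (δ / (10 * K ^ 3)) with hd
  have hd0 : 0 < d := lt_min one_pos (by positivity)
  have hd1 : d ≤ 1 := min_le_left _ _
  have hd2 : 10 * K ^ 3 * d ≤ δ := by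
    have : d ≤ δ / (10 * K ^ 3) := min_le_right _ _
    rw [le_div_iff₀ (by positivity)] at this
    linarith
  obtain ⟨β, hβ, n0, hreg⟩ := reg (Fin (m + 3)) hd0 hd1
  refine ⟨d / 4 * β * (d / 2 * (d / 4 * β)) ^ (m + 1), by positivity, n0, ?_⟩
  intro G _ _ hn r hcop hexp T hT
  set n := Fintype.card G with hnd
  have hn0 : 0 < n := Fintype.card_pos
  set E : Fin (m + 3) → G → G → Prop := fun i a b => ∃ x ∈ T, x ^ r i = a⁻¹ * b with hE
  obtain ⟨pt, hpt⟩ := hreg G hn (fun i => i + 1) (by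
      intro i h
      have : (1 : Fin (m + 3)) = 0 := by simpa using h
      exact absurd this (by simp)) (by
      intro i h
      rw [add_assoc] at h
      have h2 : (1 + 1 : Fin (m + 3)) = 0 := by simpa using h
      have h3 := congrArg Fin.val h2
      rw [Fin.val_add] at h3
      simp [Nat.mod_eq_of_lt] at h3) E
  set φ : ℕ → Fin (m + 3) := fun j => ⟨j % (m + 3), Nat.mod_lt _ (by omega)⟩ with hφ
  have hφ1 : ∀ j, φ (j + 1) = φ j + 1 := by
    intro j
    apply Fin.ext
    rw [Fin.val_add]
    simp [hφ, Nat.add_mod]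
  have hφ2 : ∀ i : Fin (m + 3), φ (i : ℕ) = i := fun i => Fin.ext (Nat.mod_eq_of_lt i.2)
  set r' : ℕ → ℕ := fun j => r (φ j) with hr'
  set R : ℕ → ℕ := fun j => ∑ i ∈ Finset.range j, r' i with hR
  have hRs : ∀ j, R (j + 1) = R j + r' j := fun j => Finset.sum_range_succ _ _
  have hRk : ∀ x : G, x ^ R (m + 3) = 1 := by
    intro x
    have : R (m + 3) = ∑ j, r j := by
      rw [hR]
      simp only
      rw [Finset.sum_range]
      apply Finset.sum_congr rfl
      intro i _
      simp only [hr']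
      rw [hφ2]
    rw [this]
    obtain ⟨t, ht⟩ := hexp
    rw [ht, pow_mul, Monoid.pow_exponent_eq_one, one_pow]
  have hinj : ∀ j, Function.Injective (fun x : G => x ^ r' j) := by
    intro j
    have hc : (Nat.card G).Coprime (r' j) := by
      rw [Nat.card_eq_fintype_card]; exact (hcop _).symm
    exact (powCoprime hc).injective
  set A : G → G → ℕ → Finset G := fun g x j => pt (φ j) (g * x ^ R j) with hA
  set bd : ℕ → Finset (G × G) := fun j => (Finset.univ ×ˢ T).filter (fun q =>
    ¬ GoodPair (E (φ j)) d (β * n) (A q.1 q.2 j) (A q.1 q.2 (j + 1))) with hbd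
  have hbdc : ∀ j, ((bd j).card : ℝ) ≤ 5 * K ^ 2 * d * (n : ℝ) ^ 2 := by
    intro j
    have h := hpt (φ j)
    rw [Fintype.card_fin] at h
    push_cast at h
    refine le_trans ?_ h
    rw [Nat.cast_le]
    apply Finset.card_le_card_of_injOn (fun q => (q.1 * q.2 ^ R j, q.1 * q.2 ^ R (j + 1)))
    · intro q hq
      rw [Finset.mem_coe] at hq ⊢
      simp only [hbd, Finset.mem_filter, Finset.mem_product, Finset.mem_univ, true_and] at hq ⊢
      refine ⟨⟨q.2, hq.1, ?_⟩, ?_⟩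
      · rw [hRs, pow_add]
        group
        simp [hr']
      · have h2 := hq.2
        simp only [hA] at h2
        rw [hφ1] at h2
        exact h2
    · intro q _ q' _ h
      simp only [Prod.mk.injEq] at h
      obtain ⟨ha, hb⟩ := h
      rw [hRs, pow_add, pow_add, ← mul_assoc, ← mul_assoc, ha] at hb
      have h2 : q.2 = q'.2 := hinj j (mul_left_cancel hb)
      rw [h2] at ha
      exact Prod.ext (mul_right_cancel ha) h2
  obtain ⟨⟨g, x⟩, hgx, hgood⟩ : ∃ q ∈ (Finset.univ : Finset G) ×ˢ T, ∀ j ∈ Finset.range (m + 3), q ∉ bd j := by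
    by_contra hcon
    push Not at hcon
    have hsub : (Finset.univ : Finset G) ×ˢ T ⊆ (Finset.range (m + 3)).biUnion bd := by
      intro q hq
      rw [Finset.mem_biUnion]
      exact hcon q hq
    have h1 := (Finset.card_le_card hsub).trans Finset.card_biUnion_le
    have h2 : (((Finset.univ : Finset G) ×ˢ T).card : ℝ) ≤ _ := Nat.cast_le.2 h1
    rw [Finset.card_product, Finset.card_univ] at h2
    push_cast at h2
    have h3 : ∑ j ∈ Finset.range (m + 3), ((bd j).card : ℝ) ≤ ∑ j ∈ Finset.range (m + 3), 5 * K ^ 2 * d * (n : ℝ) ^ 2 :=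
      Finset.sum_le_sum fun j _ => hbdc j
    rw [Finset.sum_const, Finset.card_range, nsmul_eq_mul] at h3
    push_cast at h3
    have hnr : (0:ℝ) < n := by exact_mod_cast hn0
    have h4 : δ * (n:ℝ) ^ 2 ≤ n * T.card := by nlinarith
    have h5 : K * (5 * K ^ 2 * d * (n:ℝ) ^ 2) = 10 * K ^ 3 * d * (n:ℝ)^2 / 2 := by ring
    have h6 : 10 * K ^ 3 * d * (n:ℝ)^2 ≤ δ * (n:ℝ)^2 := mul_le_mul_of_nonneg_right hd2 (by positivity)
    have h7 : 0 < δ * (n:ℝ) ^ 2 := by positivity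
    linarith
  have hpc := path_count T r' m hd0 hd1 (b := β * n) (by positivity) (A g x) (by
      simp only [hA]
      rw [hRk]
      have : φ (m + 3) = φ 0 := by simp [hφ, Fin.ext_iff]
      rw [this]
      simp [hR]) (fun j => E (φ j)) (fun j v w h => h) (by
      intro j hj
      have := hgood j (Finset.mem_range.2 hj)
      simp only [hbd, Finset.mem_filter, hgx, true_and, not_not] at this
      exact this)
  rw [cnt_eq] at hpc
  refine le_trans (le_of_eq ?_) (hpc.trans (le_of_eq ?_))
  · rw [show d / 4 * (β * n) = d / 4 * β * n by ring, ← mul_assoc (d / 2), mul_pow, pow_succ (n:ℝ) (m+1)]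
    ring
  · simp only [hr', hφ2]

/-- a solution is determined by all coordinates but one -/
def Det {k : ℕ} {G : Type} (S : Finset (Fin k → G)) : Prop :=
  ∀ x ∈ S, ∀ y ∈ S, ∀ l, (∀ j, j ≠ l → x j = y j) → x = y

lemma det_of {k : ℕ} {G : Type} [Fintype G] [Group G] (r : Fin k → ℕ)
    (hcop : ∀ j, Nat.Coprime (r j) (Fintype.card G)) (S : Finset (Fin k → G))
    (hS : ∀ x, x ∈ S ↔ ((List.finRange k).map (fun j => x j ^ r j)).prod = 1) : Det S := by
  intro x hx y hy l h
  rw [hS] at hx hy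
  rw [← hy] at hx
  obtain ⟨s, t, hst⟩ := List.append_of_mem (List.mem_finRange l)
  have hnd := List.nodup_finRange k
  rw [hst] at hx hnd
  rw [List.nodup_append] at hnd
  have hls : ∀ j ∈ s, j ≠ l := fun j hj => hnd.2.2 j hj l (by simp)
  have hlt : ∀ j ∈ t, j ≠ l := by
    intro j hj hjl
    have := (List.nodup_cons.1 hnd.2.1).1
    exact this (hjl ▸ hj)
  have e1 : s.map (fun j => x j ^ r j) = s.map (fun j => y j ^ r j) :=
    List.map_congr_left fun j hj => by rw [h j (hls j hj)]
  have e2 : t.map (fun j => x j ^ r j) = t.map (fun j => y j ^ r j) :=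
    List.map_congr_left fun j hj => by rw [h j (hlt j hj)]
  rw [List.map_append, List.map_append, List.map_cons, List.map_cons, List.prod_append,
    List.prod_append, List.prod_cons, List.prod_cons, e1, e2] at hx
  have h3 := mul_right_cancel (mul_left_cancel hx)
  have hc : (Nat.card G).Coprime (r l) := by
    rw [Nat.card_eq_fintype_card]; exact (hcop _).symm
  have h4 : x l = y l := (powCoprime hc).injective h3
  funext j
  by_cases hj : j = l
  · rw [hj, h4]
  · exact h j hj

lemma card_restr {k : ℕ} {G : Type} [Fintype G] (A : Finset (Fin k → G)) (U : Finset (Fin k))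
    (h : ∀ x ∈ A, ∀ y ∈ A, (∀ j ∈ U, x j = y j) → x = y) : A.card ≤ Fintype.card G ^ U.card := by
  have := Finset.card_le_card_of_injOn (s := A) (t := (Finset.univ : Finset (U → G)))
    (fun x j => x j) (fun _ _ => Finset.mem_coe.2 (Finset.mem_univ _)) (by
      intro x hx y hy hxy
      exact h x hx y hy fun j hj => congrFun hxy ⟨j, hj⟩)
  refine this.trans (le_of_eq ?_)
  rw [Finset.card_univ, Fintype.card_fun, Fintype.card_coe]

lemma card_S_le {m : ℕ} {G : Type} [Fintype G] {S : Finset (Fin (m + 3) → G)} (hQ : Det S) :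
    S.card ≤ Fintype.card G ^ (m + 2) := by
  have := card_restr S (Finset.univ.erase 0) (fun x hx y hy h => hQ x hx y hy 0 (fun j hj => h j (by simp [hj])))
  simpa using this

lemma card_noninj_le {m : ℕ} {G : Type} [Fintype G] {S : Finset (Fin (m + 3) → G)} (hQ : Det S) :
    (S.filter (fun x => ¬ Function.Injective x)).card ≤ (m + 3) ^ 2 * Fintype.card G ^ (m + 1) := by
  have hsub : S.filter (fun x => ¬ Function.Injective x) ⊆
      (Finset.univ.filter (fun q : Fin (m + 3) × Fin (m + 3) => q.1 ≠ q.2)).biUnion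
        (fun q => S.filter (fun x => x q.1 = x q.2)) := by
    intro x hx
    rw [Finset.mem_filter] at hx
    have h2 := hx.2
    simp only [Function.Injective, not_forall] at h2
    obtain ⟨i, j, hij, hne⟩ := h2
    rw [Finset.mem_biUnion]
    exact ⟨(i, j), by simp [hne], by simp [hx.1, hij]⟩
  refine (Finset.card_le_card hsub).trans (Finset.card_biUnion_le.trans ?_)
  refine (Finset.sum_le_card_nsmul _ _ (Fintype.card G ^ (m + 1)) ?_).trans ?_
  · rintro ⟨i, j⟩ hq
    simp only [Finset.mem_filter, Finset.mem_univ, true_and] at hq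
    obtain ⟨l, hl⟩ : ∃ l, l ∉ ({i, j} : Finset (Fin (m + 3))) := by
      by_contra hcon
      push Not at hcon
      have := Finset.card_le_card (fun l _ => hcon l : (Finset.univ : Finset (Fin (m + 3))) ⊆ {i, j})
      have h2 := Finset.card_le_two (a := i) (b := j)
      simp only [Finset.card_univ, Fintype.card_fin] at this
      omega
    simp only [Finset.mem_insert, Finset.mem_singleton, not_or] at hl
    have := card_restr (S.filter (fun x => x i = x j)) ((Finset.univ.erase i).erase l) (by
      intro x hx y hy h
      rw [Finset.mem_filter] at hx hy
      apply hQ x hx.1 y hy.1 l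
      intro t ht
      by_cases hti : t = i
      · rw [hti, hx.2, hy.2]
        exact h j (by simp [Ne.symm hq, Ne.symm hl.2])
      · exact h t (by simp [hti, ht]))
    refine this.trans (le_of_eq ?_)
    rw [Finset.card_erase_of_mem (by simp [hl.1]), Finset.card_erase_of_mem (by simp)]
    simp
  · rw [smul_eq_mul]
    apply Nat.mul_le_mul_right
    refine (Finset.card_le_univ _).trans (le_of_eq ?_)
    simp [sq]

lemma card_cont_le {m : ℕ} {G : Type} [Fintype G] {S : Finset (Fin (m + 3) → G)} (hQ : Det S)
    (T : Finset G) (t : ℕ) (hT : T.card = t) (ht : t ≤ m + 2) :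
    (S.filter (fun x => T ⊆ Finset.univ.image x)).card ≤
      (m + 3) ^ (m + 3) * Fintype.card G ^ (m + 2 - t) := by
  have hsub : S.filter (fun x => T ⊆ Finset.univ.image x) ⊆
      (Finset.univ : Finset (T → Fin (m + 3))).biUnion
        (fun f => S.filter (fun x => ∀ v, x (f v) = v)) := by
    intro x hx
    rw [Finset.mem_filter] at hx
    have : ∀ v : T, ∃ j, x j = v := by
      intro v
      have := hx.2 v.2
      simpa using this
    choose f hf using this
    rw [Finset.mem_biUnion]
    exact ⟨f, Finset.mem_univ _, by simp [hx.1, hf]⟩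
  refine (Finset.card_le_card hsub).trans (Finset.card_biUnion_le.trans ?_)
  refine (Finset.sum_le_card_nsmul _ _ (Fintype.card G ^ (m + 2 - t)) ?_).trans ?_
  · intro f _
    by_cases hinj : Function.Injective f
    · have hc : (Finset.univ.image f).card = t := by
        rw [Finset.card_image_of_injective _ hinj, Finset.card_univ, Fintype.card_coe, hT]
      obtain ⟨l, hl⟩ : ∃ l, l ∉ Finset.univ.image f := by
        by_contra hcon
        push Not at hcon
        have := Finset.card_le_card (fun l _ => hcon l : (Finset.univ : Finset (Fin (m + 3))) ⊆ _)
        simp only [Finset.card_univ, Fintype.card_fin] at this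
        omega
      have := card_restr (S.filter (fun x => ∀ v : T, x (f v) = (v : G))) ((Finset.univ \ Finset.univ.image f).erase l) (by
        intro x hx y hy h
        rw [Finset.mem_filter] at hx hy
        apply hQ x hx.1 y hy.1 l
        intro j hj
        by_cases hji : j ∈ Finset.univ.image f
        · obtain ⟨v, -, rfl⟩ := Finset.mem_image.1 hji
          rw [hx.2, hy.2]
        · exact h j (Finset.mem_erase.2 ⟨hj, Finset.mem_sdiff.2 ⟨Finset.mem_univ _, hji⟩⟩))
      refine this.trans (le_of_eq ?_)
      rw [Finset.card_erase_of_mem (Finset.mem_sdiff.2 ⟨Finset.mem_univ _, hl⟩),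
        Finset.card_sdiff_of_subset (Finset.subset_univ _), hc, Finset.card_univ, Fintype.card_fin]
      congr 1
      omega
    · rw [Finset.card_eq_zero.2]
      · exact Nat.zero_le _
      · rw [Finset.filter_eq_empty_iff]
        intro x _ hx
        apply hinj
        intro v w hvw
        apply Subtype.ext
        rw [← hx v, ← hx w, hvw]
  · rw [smul_eq_mul]
    apply Nat.mul_le_mul_right
    rw [Finset.card_univ, Fintype.card_fun, Fintype.card_fin, Fintype.card_coe, hT]
    exact Nat.pow_le_pow_right (by omega) (by omega)

/-- the solution hypergraph -/
noncomputable def HH {k : ℕ} {G : Type} (S : Finset (Fin k → G)) : Finset (Finset G) :=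
  (S.filter (fun x => Function.Injective x)).image (fun x => Finset.univ.image x)

lemma mem_HH {k : ℕ} {G : Type} {S : Finset (Fin k → G)} {E : Finset G} :
    E ∈ HH S ↔ ∃ x ∈ S, Function.Injective x ∧ Finset.univ.image x = E := by
  unfold HH
  simp only [Finset.mem_image, Finset.mem_filter, and_assoc]

lemma card_HH {k : ℕ} {G : Type} {S : Finset (Fin k → G)} {E : Finset G} (h : E ∈ HH S) :
    E.card = k := by
  obtain ⟨x, -, hx, rfl⟩ := mem_HH.1 h
  rw [Finset.card_image_of_injective _ hx]; simp

lemma card_HH_le {m : ℕ} {G : Type} [Fintype G] {S : Finset (Fin (m + 3) → G)} (hQ : Det S) :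
    (HH S).card ≤ Fintype.card G ^ (m + 2) :=
  Finset.card_image_le.trans ((Finset.card_le_card (Finset.filter_subset _ _)).trans (card_S_le hQ))

lemma HH_cont_le {m : ℕ} {G : Type} [Fintype G] {S : Finset (Fin (m + 3) → G)} (hQ : Det S)
    (T : Finset G) (t : ℕ) (hT : T.card = t) (ht : t ≤ m + 2) :
    ((HH S).filter (fun E => T ⊆ E)).card ≤ (m + 3) ^ (m + 3) * Fintype.card G ^ (m + 2 - t) := by
  refine le_trans ?_ (card_cont_le hQ T t hT ht)
  have : (HH S).filter (fun E => T ⊆ E) ⊆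
      (S.filter (fun x => T ⊆ Finset.univ.image x)).image (fun x => Finset.univ.image x) := by
    intro E hE
    rw [Finset.mem_filter] at hE
    obtain ⟨x, hx, -, rfl⟩ := mem_HH.1 hE.1
    exact Finset.mem_image.2 ⟨x, Finset.mem_filter.2 ⟨hx, hE.2⟩, rfl⟩
  exact (Finset.card_le_card this).trans Finset.card_image_le

lemma HH_ge {k : ℕ} {G : Type} [Fintype G] (S : Finset (Fin k → G)) (C : Finset G) :
    (S.filter (fun x => Function.Injective x ∧ ∀ j, x j ∈ C)).card ≤
      k ^ k * ((HH S).filter (fun E => E ⊆ C)).card := by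
  have h1 := Finset.card_le_mul_card_image (s := S.filter (fun x => Function.Injective x ∧ ∀ j, x j ∈ C))
    (f := fun x => Finset.univ.image x) (k ^ k) (by
      intro E hE
      obtain ⟨x, hx, rfl⟩ := Finset.mem_image.1 hE
      rw [Finset.mem_filter] at hx
      have hc : (Finset.univ.image x).card = k := by
        rw [Finset.card_image_of_injective _ hx.2.1]; simp
      have hsub : (S.filter (fun x => Function.Injective x ∧ ∀ j, x j ∈ C)).filter
          (fun y => Finset.univ.image y = Finset.univ.image x) ⊆
          Fintype.piFinset (fun _ : Fin k => Finset.univ.image x) := by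
        intro y hy
        rw [Fintype.mem_piFinset]
        intro j
        rw [← (Finset.mem_filter.1 hy).2]
        exact Finset.mem_image_of_mem _ (Finset.mem_univ _)
      refine (Finset.card_le_card hsub).trans (le_of_eq ?_)
      rw [Fintype.card_piFinset]
      simp only [hc]
      simp)
  refine h1.trans (Nat.mul_le_mul_left _ (Finset.card_le_card ?_))
  intro E hE
  obtain ⟨x, hx, rfl⟩ := Finset.mem_image.1 hE
  rw [Finset.mem_filter] at hx ⊢
  refine ⟨mem_HH.2 ⟨x, hx.1, hx.2.1, rfl⟩, ?_⟩
  intro v hv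
  obtain ⟨j, -, rfl⟩ := Finset.mem_image.1 hv
  exact hx.2.2 j

lemma pair_sum_one {m : ℕ} {G : Type} [Fintype G] {S : Finset (Fin (m + 3) → G)} (hQ : Det S)
    {p : ℝ} (h0 : 0 ≤ p) (hpn : 1 ≤ p * Fintype.card G) {E : Finset G} (hE : E ∈ HH S) :
    ∑ E' ∈ (HH S).filter (fun E' => E' ≠ E ∧ ¬ Disjoint E E'), p ^ (E ∪ E').card ≤
      2 ^ (m + 3) * ((m + 3 : ℕ) : ℝ) ^ (m + 3) * ((Fintype.card G : ℝ) ^ (m + 1) * p ^ (2 * m + 5)) := by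
  set n := Fintype.card G with hn
  set F := (HH S).filter (fun E' => E' ≠ E ∧ ¬ Disjoint E E') with hF
  have hEc := card_HH hE
  rw [← Finset.sum_fiberwise_of_maps_to (s := F) (t := E.powerset) (g := fun E' => E ∩ E')
    (fun E' _ => Finset.mem_powerset.2 Finset.inter_subset_left)]
  have hcard : (E.powerset.card : ℝ) = 2 ^ (m + 3) := by rw [Finset.card_powerset, hEc]; simp
  rw [mul_assoc, ← hcard, ← nsmul_eq_mul]
  apply Finset.sum_le_card_nsmul
  intro T hT
  have hn0 : (0:ℝ) ≤ n := Nat.cast_nonneg _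
  have hfib : ∀ E' ∈ F.filter (fun E' => E ∩ E' = T), E' ∈ HH S ∧ E' ≠ E ∧ T ⊆ E' ∧
      1 ≤ T.card ∧ T.card ≤ m + 2 ∧ (E ∪ E').card = 2 * m + 6 - T.card := by
    intro E' hE'
    rw [Finset.mem_filter] at hE'
    obtain ⟨h1, h2⟩ := hE'
    rw [hF, Finset.mem_filter] at h1
    obtain ⟨h1, h3, h4⟩ := h1
    have hc' := card_HH h1
    have hu := Finset.card_union_add_card_inter E E'
    rw [h2, hEc, hc'] at hu
    refine ⟨h1, h3, h2 ▸ Finset.inter_subset_right, ?_, ?_, by omega⟩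
    · rw [Nat.one_le_iff_ne_zero, Ne, Finset.card_eq_zero, ← h2, ← Finset.disjoint_iff_inter_eq_empty]
      exact h4
    · by_contra hcon
      have h5 : E ⊆ E' := by
        have : E ∩ E' = E := Finset.eq_of_subset_of_card_le Finset.inter_subset_left (by rw [h2]; omega)
        rw [← this]; exact Finset.inter_subset_right
      exact h3 (Finset.eq_of_subset_of_card_le h5 (by omega)).symm
  rcases (F.filter (fun E' => E ∩ E' = T)).eq_empty_or_nonempty with hemp | ⟨E0, hE0⟩
  · rw [hemp, Finset.sum_empty]; positivity
  obtain ⟨-, -, -, ht1, ht2, -⟩ := hfib E0 hE0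
  obtain ⟨t, ht⟩ : ∃ t, T.card = t + 1 := ⟨T.card - 1, by omega⟩
  rw [Finset.sum_congr rfl (fun E' hE' => by rw [(hfib E' hE').2.2.2.2.2]), Finset.sum_const, nsmul_eq_mul]
  have hcnt : (F.filter (fun E' => E ∩ E' = T)).card ≤ (m + 3) ^ (m + 3) * n ^ (m + 2 - T.card) := by
    refine le_trans (Finset.card_le_card ?_) (HH_cont_le hQ T _ rfl ht2)
    intro E' hE'
    have := hfib E' hE'
    exact Finset.mem_filter.2 ⟨this.1, this.2.2.1⟩
  have hcnt' : ((F.filter (fun E' => E ∩ E' = T)).card : ℝ) ≤ ((m + 3 : ℕ) : ℝ) ^ (m + 3) * (n : ℝ) ^ (m + 2 - T.card) := by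
    exact_mod_cast hcnt
  calc ((F.filter (fun E' => E ∩ E' = T)).card : ℝ) * p ^ (2 * m + 6 - T.card)
      ≤ ((m + 3 : ℕ) : ℝ) ^ (m + 3) * (n : ℝ) ^ (m + 2 - T.card) * p ^ (2 * m + 6 - T.card) :=
        mul_le_mul_of_nonneg_right hcnt' (by positivity)
    _ ≤ ((m + 3 : ℕ) : ℝ) ^ (m + 3) * ((n : ℝ) ^ (m + 2 - T.card) * p ^ (2 * m + 6 - T.card)) * (p * n) ^ t := by
        rw [mul_assoc]
        exact le_mul_of_one_le_right (by positivity) (one_le_pow₀ hpn)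
    _ = _ := by
        rw [mul_assoc]
        congr 1
        rw [mul_pow, show m + 1 = (m + 2 - T.card) + t by omega, show 2 * m + 5 = (2 * m + 6 - T.card) + t by omega,
          pow_add, pow_add]
        ring

lemma pair_sum {m : ℕ} {G : Type} [Fintype G] {S : Finset (Fin (m + 3) → G)} (hQ : Det S)
    {p : ℝ} (h0 : 0 ≤ p) (hpn : 1 ≤ p * Fintype.card G) (J : Finset (Finset G)) (hJ : J ⊆ HH S) :
    ∑ E ∈ J, ∑ E' ∈ J.filter (fun E' => E' ≠ E ∧ ¬ Disjoint E E'), p ^ (E ∪ E').card ≤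
      2 ^ (m + 3) * ((m + 3 : ℕ) : ℝ) ^ (m + 3) *
        ((Fintype.card G : ℝ) ^ (m + 1) * p ^ (m + 2)) ^ 2 * (p * Fintype.card G) := by
  have h1 : ∀ E ∈ J, ∑ E' ∈ J.filter (fun E' => E' ≠ E ∧ ¬ Disjoint E E'), p ^ (E ∪ E').card ≤
      2 ^ (m + 3) * ((m + 3 : ℕ) : ℝ) ^ (m + 3) * ((Fintype.card G : ℝ) ^ (m + 1) * p ^ (2 * m + 5)) := by
    intro E hE
    refine le_trans ?_ (pair_sum_one hQ h0 hpn (hJ hE))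
    apply Finset.sum_le_sum_of_subset_of_nonneg (Finset.filter_subset_filter _ hJ)
    intros; positivity
  have h2 := Finset.sum_le_card_nsmul _ _ _ h1
  refine h2.trans ?_
  rw [nsmul_eq_mul]
  have h3 : (J.card : ℝ) ≤ (Fintype.card G : ℝ) ^ (m + 2) := by
    exact_mod_cast (Finset.card_le_card hJ).trans (card_HH_le hQ)
  refine (mul_le_mul_of_nonneg_right h3 (by positivity)).trans (le_of_eq ?_)
  ring

lemma binomProb_eq {G : Type} [Fintype G] (p : ℝ) (Q : Finset G → Prop) :
    binomProb p (Finset.univ.filter Q) = Ex p Finset.univ (fun A => if Q A then 1 else 0) := by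
  unfold binomProb Ex
  rw [Finset.sum_filter, Finset.powerset_univ, Finset.card_univ]
  apply Finset.sum_congr rfl
  intro A _
  by_cases h : Q A <;> simp [h]

/-- number of edges inside -/
noncomputable def XH {G : Type} (H : Finset (Finset G)) (A : Finset G) : ℝ :=
  ∑ E ∈ H, if E ⊆ A then (1:ℝ) else 0

lemma XH_eq {G : Type} (H : Finset (Finset G)) (A : Finset G) :
    XH H A = ((H.filter (fun E => E ⊆ A)).card : ℝ) := by
  simp [XH]

lemma Ex_XH {G : Type} [Fintype G] (p : ℝ) (H : Finset (Finset G)) :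
    Ex p Finset.univ (XH H) = ∑ E ∈ H, p ^ E.card := by
  unfold XH
  rw [Ex_sum]
  exact Finset.sum_congr rfl fun E _ => Ex_sub (Finset.subset_univ _)

lemma variance {G : Type} [Fintype G] {p : ℝ} (h0 : 0 ≤ p) (H : Finset (Finset G)) :
    Ex p Finset.univ (fun A => (XH H A - ∑ E ∈ H, p ^ E.card) ^ 2) ≤
      ∑ E ∈ H, p ^ E.card +
        ∑ E ∈ H, ∑ E' ∈ H.filter (fun E' => E' ≠ E ∧ ¬ Disjoint E E'), p ^ (E ∪ E').card := by
  set μ := ∑ E ∈ H, p ^ E.card with hμ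
  have e1 : Ex p Finset.univ (fun A => (XH H A) ^ 2) = ∑ E ∈ H, ∑ E' ∈ H, p ^ (E ∪ E').card := by
    have : ∀ A, (XH H A) ^ 2 = ∑ E ∈ H, ∑ E' ∈ H, if E ∪ E' ⊆ A then (1:ℝ) else 0 := by
      intro A
      rw [XH, sq, Finset.sum_mul_sum]
      apply Finset.sum_congr rfl
      intro E _
      apply Finset.sum_congr rfl
      intro E' _
      simp only [Finset.union_subset_iff]
      by_cases a : E ⊆ A <;> by_cases b : E' ⊆ A <;> simp [a, b]
    simp_rw [this]
    rw [Ex_sum]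
    apply Finset.sum_congr rfl
    intro E _
    rw [Ex_sum]
    exact Finset.sum_congr rfl fun E _ => Ex_sub (Finset.subset_univ _)
  have e2 : Ex p Finset.univ (fun A => (XH H A - μ) ^ 2) =
      ∑ E ∈ H, ∑ E' ∈ H, p ^ (E ∪ E').card - μ ^ 2 := by
    have : ∀ A, (XH H A - μ) ^ 2 = (XH H A) ^ 2 + ((-2 * μ) * XH H A + μ ^ 2) := by intro A; ring
    simp_rw [this]
    rw [Ex_add, Ex_add, Ex_mul, Ex_const, e1, Ex_XH, ← hμ]
    ring
  rw [e2]
  have e3 : ∑ E ∈ H, ∑ E' ∈ H, p ^ (E ∪ E').card ≤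
      ∑ E ∈ H, (p ^ E.card + (∑ E' ∈ H.filter (fun E' => E' ≠ E ∧ ¬ Disjoint E E'), p ^ (E ∪ E').card
        + p ^ E.card * μ)) := by
    apply Finset.sum_le_sum
    intro E hE
    have hs : p ^ E.card = ∑ E' ∈ H, if E' = E then p ^ E.card else 0 := by
      rw [Finset.sum_ite_eq' H E]; simp [hE]
    rw [hμ, Finset.mul_sum, Finset.sum_filter, ← Finset.sum_add_distrib]
    nth_rewrite 1 [hs]
    rw [← Finset.sum_add_distrib]
    apply Finset.sum_le_sum
    intro E' _
    by_cases h1 : E' = E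
    · subst h1
      simp
      positivity
    · by_cases h2 : Disjoint E E'
      · simp [h1, h2, Finset.card_union_of_disjoint h2, pow_add]
      · simp [h1, h2]
        positivity
  rw [Finset.sum_add_distrib, Finset.sum_add_distrib, ← Finset.sum_mul, ← hμ] at e3
  nlinarith

lemma cheb {G : Type} [Fintype G] {p : ℝ} (h0 : 0 ≤ p) (h1 : p ≤ 1) (F : Finset G → ℝ) (μ l V : ℝ) (hl : 0 < l)
    (hV : Ex p Finset.univ (fun A => (F A - μ) ^ 2) ≤ V) :
    Ex p Finset.univ (fun A => if l ≤ |F A - μ| then 1 else 0) ≤ V / l ^ 2 := by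
  have h : Ex p Finset.univ (fun A => if l ≤ |F A - μ| then 1 else 0) ≤
      Ex p Finset.univ (fun A => (1 / l ^ 2) * (F A - μ) ^ 2) := by
    apply Ex_mono h0 h1
    intro A _
    split_ifs with h
    · rw [one_div, ← div_eq_inv_mul, le_div_iff₀ (by positivity), one_mul, ← sq_abs (F A - μ)]
      exact pow_le_pow_left₀ hl.le h 2
    · positivity
  rw [Ex_mul] at h
  refine h.trans ?_
  rw [one_div, ← div_eq_inv_mul]
  exact div_le_div_of_nonneg_right hV (by positivity)

lemma size_low {G : Type} [Fintype G] {p : ℝ} (h0 : 0 < p) (h1 : p ≤ 1) (hn : 0 < Fintype.card G) :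
    Ex p Finset.univ (fun A : Finset G => if (A.card : ℝ) ≤ p * Fintype.card G / 2 then 1 else 0) ≤
      4 / (p * Fintype.card G) := by
  set n := Fintype.card G with hnd
  have hnr : (0:ℝ) < n := by exact_mod_cast hn
  set H : Finset (Finset G) := Finset.univ.image (fun v : G => ({v} : Finset G)) with hH
  have hinj : Function.Injective (fun v : G => ({v} : Finset G)) := Finset.singleton_injective
  have hX : ∀ A, XH H A = A.card := by
    intro A
    rw [XH, hH, Finset.sum_image hinj.injOn]
    simp
  have hμ : ∑ E ∈ H, p ^ E.card = p * n := by
    rw [hH, Finset.sum_image hinj.injOn]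
    simp [hnd, mul_comm]
  have hpair : ∑ E ∈ H, ∑ E' ∈ H.filter (fun E' => E' ≠ E ∧ ¬ Disjoint E E'), p ^ (E ∪ E').card = 0 := by
    apply Finset.sum_eq_zero
    intro E hE
    apply Finset.sum_eq_zero
    intro E' hE'
    exfalso
    rw [Finset.mem_filter] at hE'
    obtain ⟨v, -, rfl⟩ := Finset.mem_image.1 hE
    obtain ⟨w, -, rfl⟩ := Finset.mem_image.1 hE'.1
    apply hE'.2.2
    rw [Finset.disjoint_singleton]
    rintro rfl
    exact hE'.2.1 rfl
  have hv := variance h0.le H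
  rw [hpair, hμ, add_zero] at hv
  have hc := cheb h0.le h1 (XH H) (p * n) (p * n / 2) (p * n) (by positivity) hv
  refine le_trans (Ex_mono h0.le h1 _ ?_) (hc.trans (le_of_eq ?_))
  · intro A _
    rw [hX]
    split_ifs with h2 h3 h3
    · exact le_rfl
    · exfalso; apply h3
      rw [abs_of_nonpos (by linarith)]; linarith
    · norm_num
    · exact le_rfl
  · field_simp; norm_num

lemma stable_many {k : ℕ} {G : Type} {S : Finset (Fin k → G)} {δ : ℝ} (hk : 0 < k) (hδ : δ ≤ 1 / 40)
    {A : Finset G} (h : StableK δ S A) : (A.card : ℝ) / 2 < XH (HH S) A := by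
  by_contra hcon
  push Not at hcon
  rw [XH_eq] at hcon
  set HA := (HH S).filter (fun E => E ⊆ A) with hHA
  have hne : ∀ E ∈ HA, ∃ v, v ∈ E := by
    intro E hE
    have := card_HH (Finset.mem_filter.1 hE).1
    exact Finset.card_pos.1 (by omega)
  rcases A.eq_empty_or_nonempty with hA | ⟨a, ha⟩
  · obtain ⟨-, x, -, hx⟩ := h A subset_rfl (by rw [hA]; simp)
    have := hx ⟨0, hk⟩
    rw [hA] at this
    simp at this
  have : Nonempty G := ⟨a⟩
  choose! f hf using hne
  obtain ⟨-, x, hx, hxA⟩ := h (A \ HA.image f) Finset.sdiff_subset (by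
    have h1 : A.card ≤ (A \ HA.image f).card + (HA.image f).card := by
      have := Finset.le_card_sdiff (HA.image f) A
      omega
    have h2 : (HA.image f).card ≤ HA.card := Finset.card_image_le
    have h3 : (A.card : ℝ) ≤ (A \ HA.image f).card + HA.card := by exact_mod_cast h1.trans (by omega)
    have h4 : δ * A.card ≤ 1 / 40 * A.card := mul_le_mul_of_nonneg_right hδ (Nat.cast_nonneg _)
    have h5 : (0:ℝ) ≤ A.card := Nat.cast_nonneg _
    linarith)
  have hEA : Finset.univ.image x ∈ HA := by
    rw [distinctPart, Finset.mem_filter] at hx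
    rw [hHA, Finset.mem_filter]
    refine ⟨mem_HH.2 ⟨x, hx.1, hx.2, rfl⟩, ?_⟩
    intro v hv
    obtain ⟨j, -, rfl⟩ := Finset.mem_image.1 hv
    exact (Finset.mem_sdiff.1 (hxA j)).1
  have hv := hf _ hEA
  obtain ⟨j, -, hj⟩ := Finset.mem_image.1 hv
  have := (Finset.mem_sdiff.1 (hxA j)).2
  apply this
  rw [hj]
  exact Finset.mem_image_of_mem _ hEA

lemma mu_le {m : ℕ} {G : Type} [Fintype G] {S : Finset (Fin (m + 3) → G)} (hQ : Det S) {p : ℝ} (h0 : 0 ≤ p) :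
    ∑ E ∈ HH S, p ^ E.card ≤ (Fintype.card G : ℝ) ^ (m + 1) * p ^ (m + 2) * (p * Fintype.card G) := by
  rw [Finset.sum_congr rfl (fun E hE => by rw [card_HH hE]), Finset.sum_const, nsmul_eq_mul]
  have h3 : ((HH S).card : ℝ) ≤ (Fintype.card G : ℝ) ^ (m + 2) := by
    exact_mod_cast card_HH_le hQ
  refine (mul_le_mul_of_nonneg_right h3 (by positivity)).trans (le_of_eq ?_)
  ring

lemma zero_large {m : ℕ} {G : Type} [Fintype G] {S : Finset (Fin (m + 3) → G)} (hQ : Det S) {p δ : ℝ}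
    (h0 : 0 ≤ p) (h1 : p ≤ 1) (hδ : δ ≤ 1 / 40) (hpn : 1 ≤ p * Fintype.card G)
    (hY : (Fintype.card G : ℝ) ^ (m + 1) * p ^ (m + 2) ≤ 1 / 8) :
    Ex p Finset.univ (fun A => if StableK δ S A then 1 else 0) ≤
      (12 + 2 ^ (m + 3) * ((m + 3 : ℕ) : ℝ) ^ (m + 3)) / (p * Fintype.card G) := by
  set n := Fintype.card G with hnd
  set Cc : ℝ := 2 ^ (m + 3) * ((m + 3 : ℕ) : ℝ) ^ (m + 3) with hCc
  have hCc0 : 0 ≤ Cc := by positivity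
  set Y := (n : ℝ) ^ (m + 1) * p ^ (m + 2) with hYd
  have hY0 : 0 ≤ Y := by positivity
  set w := p * n with hw
  have hn : 0 < n := by
    rcases Nat.eq_zero_or_pos n with h | h
    · rw [hw, h] at hpn; norm_num at hpn
    · exact h
  have hp0 : 0 < p := by
    rcases h0.eq_or_lt with h | h
    · rw [hw, ← h] at hpn; norm_num at hpn
    · exact h
  set μ := ∑ E ∈ HH S, p ^ E.card with hμ
  have hμle : μ ≤ w / 8 := by
    have := mu_le hQ h0
    refine this.trans ?_
    have : Y * w ≤ 1 / 8 * w := mul_le_mul_of_nonneg_right hY (by linarith)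
    linarith
  have hv := (variance h0 (HH S)).trans (add_le_add_right (pair_sum hQ h0 hpn (HH S) subset_rfl) _)
  have hv2 : Ex p Finset.univ (fun A => (XH (HH S) A - μ) ^ 2) ≤ (8 + Cc) / 64 * w := by
    refine hv.trans ?_
    have : Cc * Y ^ 2 * w ≤ Cc * (1 / 8) ^ 2 * w := by gcongr
    change μ + Cc * Y ^ 2 * w ≤ _
    linarith
  have hc := cheb h0 h1 _ _ (w / 8) _ (by positivity) hv2
  have hs := size_low hp0 h1 hn
  rw [← hnd, ← hw] at hs
  have hfin : Ex p Finset.univ (fun A => if StableK δ S A then 1 else 0) ≤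
      Ex p Finset.univ (fun A => (if w / 8 ≤ |XH (HH S) A - μ| then 1 else 0) +
        (if (A.card : ℝ) ≤ w / 2 then 1 else 0)) := by
    apply Ex_mono h0 h1
    intro A _
    by_cases hst : StableK δ S A
    · rw [if_pos hst]
      have := stable_many (by omega) hδ hst
      by_cases hA : (A.card : ℝ) ≤ w / 2
      · rw [if_pos hA]; split_ifs <;> norm_num
      · rw [if_pos]
        · split_ifs <;> norm_num
        · rw [le_abs]; left; push Not at hA; linarith
    · rw [if_neg hst]; split_ifs <;> norm_num
  rw [Ex_add] at hfin
  refine (hfin.trans (add_le_add hc hs)).trans (le_of_eq ?_)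
  have : w ≠ 0 := by positivity
  field_simp
  ring

lemma zero_small {m : ℕ} {G : Type} [Fintype G] {S : Finset (Fin (m + 3) → G)} (hQ : Det S) {p δ : ℝ}
    (h0 : 0 ≤ p) (h1 : p ≤ 1) (hδ : δ ≤ 1 / 40) :
    Ex p Finset.univ (fun A => if StableK δ S A then 1 else 0) ≤
      (Fintype.card G : ℝ) ^ (m + 1) * p ^ (m + 2) * (p * Fintype.card G) := by
  refine le_trans ?_ (mu_le hQ h0)
  rw [← Ex_XH]
  apply Ex_mono h0 h1
  intro A _
  split_ifs with h
  · have h2 := stable_many (by omega) hδ h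
    have h3 : (0:ℝ) < XH (HH S) A := lt_of_le_of_lt (by positivity) h2
    rw [XH_eq] at h3 ⊢
    have : 0 < ((HH S).filter (fun E => E ⊆ A)).card := by exact_mod_cast h3
    exact_mod_cast this
  · rw [XH_eq]; positivity

lemma supersatH (m : ℕ) {δ : ℝ} (hδ : 0 < δ) : ∃ c : ℝ, 0 < c ∧ ∃ n0 : ℕ,
    ∀ (G : Type) [Fintype G] [Group G], n0 ≤ Fintype.card G → ∀ (r : Fin (m + 3) → ℕ),
      (∀ j, Nat.Coprime (r j) (Fintype.card G)) → Monoid.exponent G ∣ ∑ j, r j →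
      ∀ S : Finset (Fin (m + 3) → G),
      (∀ x, x ∈ S ↔ ((List.finRange (m + 3)).map (fun j => x j ^ r j)).prod = 1) →
      ∀ C : Finset G, δ * Fintype.card G ≤ C.card →
      c * (Fintype.card G : ℝ) ^ (m + 2) ≤ (((HH S).filter (fun E => E ⊆ C)).card : ℝ) := by
  obtain ⟨c, hc, n0, h⟩ := supersat m hδ
  set K : ℝ := ((m + 3 : ℕ) : ℝ) with hK
  have hK0 : 0 < K := by positivity
  refine ⟨c / (2 * K ^ (m + 3)), by positivity, max n0 ⌈2 * K ^ 2 / c⌉₊, ?_⟩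
  intro G _ _ hn r hcop hexp S hS C hC
  have h1 := h G ((le_max_left _ _).trans hn) r hcop hexp C hC
  have hn2 : 2 * K ^ 2 / c ≤ Fintype.card G :=
    (Nat.le_ceil _).trans (by exact_mod_cast (le_max_right _ _).trans hn)
  set n := Fintype.card G with hnd
  have hQ := det_of r hcop S hS
  have h2 := card_noninj_le hQ
  have h3 := HH_ge S C
  set A1 := (Finset.univ : Finset (Fin (m + 3) → G)).filter
        (fun x => (∀ j, x j ∈ C) ∧ ((List.finRange (m + 3)).map (fun j => x j ^ r j)).prod = 1) with hA1
  have hsub : A1 ⊆ S.filter (fun x => Function.Injective x ∧ ∀ j, x j ∈ C) ∪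
      S.filter (fun x => ¬ Function.Injective x) := by
    intro x hx
    rw [hA1, Finset.mem_filter, ← hS] at hx
    rw [Finset.mem_union, Finset.mem_filter, Finset.mem_filter]
    by_cases hi : Function.Injective x
    · exact Or.inl ⟨hx.2.2, hi, hx.2.1⟩
    · exact Or.inr ⟨hx.2.2, hi⟩
  have h4 := (Finset.card_le_card hsub).trans (Finset.card_union_le _ _)
  have h5 : A1.card ≤ (m + 3) ^ (m + 3) * ((HH S).filter (fun E => E ⊆ C)).card + (m + 3) ^ 2 * n ^ (m + 1) :=
    h4.trans (add_le_add h3 h2)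
  have h6 : (A1.card : ℝ) ≤ K ^ (m + 3) * ((HH S).filter (fun E => E ⊆ C)).card + K ^ 2 * (n:ℝ) ^ (m + 1) := by
    have := (Nat.cast_le (α := ℝ)).2 h5
    rw [hK]
    push_cast at this ⊢
    exact this
  have h7 : 2 * K ^ 2 * (n:ℝ) ^ (m + 1) ≤ c * (n:ℝ) ^ (m + 2) := by
    rw [div_le_iff₀ hc] at hn2
    rw [pow_succ (n:ℝ) (m + 1)]
    have : (0:ℝ) ≤ (n:ℝ) ^ (m + 1) := by positivity
    nlinarith
  have h8 : c / (2 * K ^ (m + 3)) * (n:ℝ) ^ (m + 2) = (c * (n:ℝ) ^ (m + 2) / 2) / K ^ (m + 3) := by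
    field_simp
  rw [h8, div_le_iff₀ (by positivity)]
  linarith

lemma log_bd {p : ℝ} (h0 : 0 < p) (h1 : p ≤ 1 / 2) : -(2 * p) ≤ Real.log (1 - p) := by
  have h := Real.one_sub_inv_le_log_of_pos (show 0 < 1 - p by linarith)
  refine le_trans ?_ h
  have : (1 - p)⁻¹ ≤ 1 + 2 * p := by
    rw [inv_le_iff_one_le_mul₀ (by linarith)]
    nlinarith
  linarith

lemma containers (m : ℕ) {δ : ℝ} (hδ : 0 < δ) : ∃ κ B : ℝ, 0 < κ ∧ 0 < B ∧ ∃ n0 : ℕ,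
    ∀ (G : Type) [Fintype G] [Group G], n0 ≤ Fintype.card G → ∀ (r : Fin (m + 3) → ℕ),
      (∀ j, Nat.Coprime (r j) (Fintype.card G)) → Monoid.exponent G ∣ ∑ j, r j →
      ∀ S : Finset (Fin (m + 3) → G),
      (∀ x, x ∈ S ↔ ((List.finRange (m + 3)).map (fun j => x j ^ r j)).prod = 1) →
      ∀ p : ℝ, 0 < p → p ≤ 1 / 2 → 1 ≤ p * Fintype.card G →
        (Fintype.card G : ℝ) ^ (m + 1) * p ^ (m + 2) = κ ^ (m + 2) →
      ∃ f : Finset G → Finset G, ∀ I, (∀ E ∈ HH S, ¬ E ⊆ I) → ∃ S', S' ⊆ I ∧ I ⊆ S' ∪ f S' ∧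
        (S'.card : ℝ) ≤ B * (p * Fintype.card G) ∧ ((f S').card : ℝ) ≤ δ * Fintype.card G := by
  obtain ⟨c, hc, n0, h⟩ := supersatH m hδ
  set Cc : ℝ := 2 ^ (m + 3) * ((m + 3 : ℕ) : ℝ) ^ (m + 3) with hCc
  have hCc0 : 0 < Cc := by positivity
  set κ : ℝ := min 1 (c / (2 * Cc)) with hκ
  have hκ0 : 0 < κ := lt_min one_pos (by positivity)
  set Y := κ ^ (m + 2) with hY
  have hY0 : 0 < Y := by positivity
  have hYle : Cc * Y ≤ c / 2 := by
    have : Y ≤ κ := pow_le_of_le_one hκ0.le (min_le_left _ _) (by omega)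
    have h2 : κ ≤ c / (2 * Cc) := min_le_right _ _
    have h3 : Y ≤ c / (2 * Cc) := this.trans h2
    rw [le_div_iff₀ (by positivity)] at h3
    linarith
  set ε : ℝ := min (1 / 2) (c * Y / 8) with hε
  have hε0 : 0 < ε := lt_min (by norm_num) (by positivity)
  have hε1 : ε < 1 := lt_of_le_of_lt (min_le_left _ _) (by norm_num)
  have hε2 : ε ≤ c * Y / 8 := min_le_right _ _
  refine ⟨κ, 2 / ε, hκ0, by positivity, n0, ?_⟩
  intro G _ _ hn r hcop hexp S hS p hp0 hp1 hpn hpY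
  set n := Fintype.card G with hnd
  set w := p * n with hw
  have hw0 : 0 < w := by linarith
  have hlog := log_bd hp0 hp1
  obtain ⟨D, hDd⟩ : ∃ D : Finset G → Prop, ∀ I, D I ↔ ∀ E ∈ HH S, ¬ E ⊆ I := ⟨_, fun _ => Iff.rfl⟩
  obtain ⟨f, hf⟩ := container (G := G) hp0 (show p < 1 by linarith) hε0 hε1
    (D := D) (fun A B hAB hB => (hDd A).2 fun E hE hEA => (hDd B).1 hB E hE (hEA.trans hAB))
  refine ⟨f, fun I hI => ?_⟩
  obtain ⟨S', h1, h2, h3, h4⟩ := hf I ((hDd I).2 hI)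
  refine ⟨S', h1, h2, ?_, ?_⟩
  · have hq : 0 < 1 - p := by linarith
    have hqe : 0 < 1 - ε := by linarith
    have h5 := Real.log_le_log (by positivity) h3
    rw [Real.log_pow, Real.log_pow] at h5
    have h6 := Real.log_le_sub_one_of_pos hqe
    have h7 : (S'.card : ℝ) * Real.log (1 - ε) ≤ S'.card * (-ε) :=
      mul_le_mul_of_nonneg_left (by linarith) (Nat.cast_nonneg _)
    have h8 : (n : ℝ) * (-(2 * p)) ≤ n * Real.log (1 - p) :=
      mul_le_mul_of_nonneg_left hlog (Nat.cast_nonneg _)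
    rw [div_mul_eq_mul_div, le_div_iff₀ hε0, hw]
    linarith
  · by_contra hcon
    push Not at hcon
    have hs := h G hn r hcop hexp S hS (f S') hcon.le
    have hQ := det_of r hcop S hS
    set J := (HH S).filter (fun E => E ⊆ f S') with hJ
    have hj := janson hp0.le (show p ≤ 1 by linarith) (f S') J (fun E hE => (Finset.mem_filter.1 hE).2)
    have hps := pair_sum hQ hp0.le hpn J (Finset.filter_subset _ _)
    have hle := h4.trans (le_trans (Ex_mono hp0.le (show p ≤ 1 by linarith) (f S') (fun R hR => by
      by_cases hDR : D R
      · rw [if_pos hDR, if_pos]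
        intro E hE
        exact (hDd R).1 hDR E (Finset.mem_filter.1 hE).1
      · rw [if_neg hDR]
        split_ifs <;> norm_num)) hj)
    rw [Real.exp_le_exp] at hle
    have hmu : c * Y * w ≤ ∑ E ∈ J, p ^ E.card := by
      rw [Finset.sum_congr rfl (fun E hE => by rw [card_HH (Finset.mem_filter.1 hE).1]), Finset.sum_const,
        nsmul_eq_mul]
      refine le_trans (le_of_eq ?_) (mul_le_mul_of_nonneg_right hs (by positivity))
      rw [show Y = (n:ℝ) ^ (m + 1) * p ^ (m + 2) from hpY.symm, hw]
      ring
    rw [hpY] at hps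
    have hps' : _ ≤ Cc * Y ^ 2 * w := hps
    have e1 : Cc * Y ^ 2 * w ≤ c / 2 * Y * w := by
      have : Cc * Y ^ 2 = (Cc * Y) * Y := by ring
      rw [this]
      gcongr
    have e2 : -(2 * p) * (ε * n) ≤ Real.log (1 - p) * (ε * n) :=
      mul_le_mul_of_nonneg_right hlog (by positivity)
    have e3 : 2 * ε * w ≤ c * Y / 4 * w := mul_le_mul_of_nonneg_right (by linarith) hw0.le
    have e4 : -(2 * p) * (ε * n) = - (2 * ε * w) := by rw [hw]; ring
    have e5 : 0 < c * Y * w := by positivity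
    linarith

lemma Ex_exp {G : Type} [Fintype G] {p : ℝ} (h0 : 0 ≤ p) (h1 : p ≤ 1) (T W : Finset G) (hd : Disjoint T W) :
    Ex p Finset.univ (fun A => if T ⊆ A then Real.exp ((A ∩ W).card : ℝ) else 0) ≤
      p ^ T.card * Real.exp (2 * p * W.card) := by
  have h := Ex_ind (p := p) (C := Finset.univ \ T) (T := T) Finset.sdiff_disjoint
    (fun A => Real.exp ((A ∩ W).card : ℝ))
  rw [Finset.sdiff_union_of_subset (Finset.subset_univ T)] at h
  rw [h]
  apply mul_le_mul_of_nonneg_left _ (by positivity)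
  have h2 : Ex p (Finset.univ \ T) (fun R => Real.exp (((R ∪ T) ∩ W).card : ℝ)) =
      Ex p (Finset.univ \ T) (fun R => ∏ v ∈ R, if v ∈ W then Real.exp 1 else 1) := by
    apply Ex_congr
    intro R _
    rw [Finset.union_inter_distrib_right, Finset.disjoint_iff_inter_eq_empty.1 hd, Finset.union_empty,
      Finset.prod_ite, Finset.prod_const, Finset.prod_const_one, mul_one, ← Real.exp_nat_mul, mul_one,
      Finset.filter_mem_eq_inter]
  rw [h2, Ex_prod]
  have he : Real.exp 1 ≤ 3 := by have := Real.exp_one_lt_d9; linarith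
  have hpos : 0 < Real.exp 1 := Real.exp_pos 1
  calc ∏ v ∈ Finset.univ \ T, (1 - p + p * (if v ∈ W then Real.exp 1 else 1))
      ≤ ∏ v ∈ Finset.univ \ T, (if v ∈ W then Real.exp (2 * p) else 1) := by
        apply Finset.prod_le_prod
        · intro v _
          have : 0 ≤ 1 - p := by linarith
          split_ifs <;> positivity
        · intro v _
          split_ifs
          · have := Real.add_one_le_exp (2 * p)
            nlinarith
          · linarith
    _ = Real.exp (2 * p) ^ (((Finset.univ \ T).filter (fun v => v ∈ W)).card) := by
        rw [Finset.prod_ite, Finset.prod_const, Finset.prod_const_one, mul_one]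
    _ ≤ Real.exp (2 * p) ^ W.card := by
        apply pow_le_pow_right₀ (Real.one_le_exp (by positivity))
        apply Finset.card_le_card
        intro v hv
        exact (Finset.mem_filter.1 hv).2
    _ = _ := by rw [← Real.exp_nat_mul]; ring_nf

lemma sum_small {G : Type} [Fintype G] {p z s : ℝ} (h0 : 0 ≤ p) (hz : 0 < z) (hz1 : z ≤ 1) :
    ∑ T ∈ (Finset.univ : Finset (Finset G)).filter (fun T => (T.card : ℝ) ≤ s), p ^ T.card ≤
      Real.exp (s * Real.log (1 / z) + p * z * Fintype.card G) := by
  have hL : 0 ≤ Real.log (1 / z) := Real.log_nonneg (by rw [le_div_iff₀ hz]; linarith)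
  calc ∑ T ∈ (Finset.univ : Finset (Finset G)).filter (fun T => (T.card : ℝ) ≤ s), p ^ T.card
      ≤ ∑ T ∈ (Finset.univ : Finset (Finset G)).filter (fun T => (T.card : ℝ) ≤ s),
          Real.exp (s * Real.log (1 / z)) * (p * z) ^ T.card := by
        apply Finset.sum_le_sum
        intro T hT
        have hs := (Finset.mem_filter.1 hT).2
        rw [mul_pow, mul_left_comm]
        apply le_mul_of_one_le_right (by positivity)
        have : z ^ T.card = Real.exp (- (T.card * Real.log (1 / z))) := by
          rw [one_div, Real.log_inv, mul_neg, neg_neg, Real.exp_nat_mul, Real.exp_log hz]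
        rw [this, ← Real.exp_add]
        apply Real.one_le_exp
        nlinarith
    _ ≤ ∑ T : Finset G, Real.exp (s * Real.log (1 / z)) * (p * z) ^ T.card := by
        apply Finset.sum_le_sum_of_subset_of_nonneg (Finset.subset_univ _)
        intros; positivity
    _ = Real.exp (s * Real.log (1 / z)) * (1 + p * z) ^ Fintype.card G := by
        rw [← Finset.mul_sum]
        congr 1
        have := Fintype.sum_pow_mul_eq_add_pow G (p * z) 1
        simp only [one_pow, mul_one] at this
        rw [this, add_comm]
    _ ≤ Real.exp (s * Real.log (1 / z)) * Real.exp (p * z) ^ Fintype.card G := by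
        apply mul_le_mul_of_nonneg_left _ (Real.exp_pos _).le
        apply pow_le_pow_left₀ (by positivity)
        have := Real.add_one_le_exp (p * z)
        linarith
    _ = _ := by
        rw [← Real.exp_nat_mul, ← Real.exp_add]
        ring_nf

lemma one_bound {k : ℕ} {G : Type} [Fintype G] {S : Finset (Fin k → G)} {p δ η : ℝ} (h0 : 0 < p) (h1 : p ≤ 1)
    (hδ0 : 0 < δ) (hδ : δ ≤ 1 / 40) (hn : 0 < Fintype.card G) (hη : η ≤ δ / 4)
    (hηL : η * Real.log (1 / (δ / 40)) ≤ δ / 40) (f : Finset G → Finset G)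
    (hf : ∀ I, (∀ E ∈ HH S, ¬ E ⊆ I) → ∃ S', S' ⊆ I ∧ I ⊆ S' ∪ f S' ∧
        (S'.card : ℝ) ≤ η * (p * Fintype.card G) ∧ ((f S').card : ℝ) ≤ δ / 40 * Fintype.card G) :
    1 - (4 + 10 / δ) / (p * Fintype.card G) ≤ Ex p Finset.univ (fun A => if StableK δ S A then 1 else 0) := by
  set n := Fintype.card G with hnd
  have hnr : (0:ℝ) < n := by exact_mod_cast hn
  set w := p * n with hw
  have hw0 : 0 < w := by positivity
  set VV := ((Finset.univ : Finset (Finset G)).filter (fun T => (T.card : ℝ) ≤ η * w)).filter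
    (fun T => ((f T).card : ℝ) ≤ δ / 40 * n) with hVV
  set t := δ / 4 * w with ht
  have hpt : ∀ A : Finset G, (1:ℝ) ≤ (if StableK δ S A then 1 else 0) +
      ((if (A.card : ℝ) ≤ w / 2 then 1 else 0) +
      ∑ T ∈ VV, Real.exp (-t) * (if T ⊆ A then Real.exp ((A ∩ (f T \ T)).card : ℝ) else 0)) := by
    intro A
    have hnn : ∀ T ∈ VV, 0 ≤ Real.exp (-t) * (if T ⊆ A then Real.exp ((A ∩ (f T \ T)).card : ℝ) else 0) := by
      intro T _
      split_ifs <;> positivity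
    have hsn := Finset.sum_nonneg hnn
    by_cases hst : StableK δ S A
    · rw [if_pos hst]
      have : (0:ℝ) ≤ (if (A.card : ℝ) ≤ w / 2 then 1 else 0) := by split_ifs <;> norm_num
      linarith
    rw [if_neg hst]
    by_cases hA : (A.card : ℝ) ≤ w / 2
    · rw [if_pos hA]; linarith
    rw [if_neg hA, zero_add, zero_add]
    push Not at hA
    have : ∃ X' ⊆ A, δ * (A.card : ℝ) ≤ X'.card ∧ ∀ E ∈ HH S, ¬ E ⊆ X' := by
      by_contra hcon
      push Not at hcon
      apply hst
      intro X' hX' hc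
      obtain ⟨E, hE, hEX⟩ := hcon X' hX' hc
      obtain ⟨x, hx, hxi, rfl⟩ := mem_HH.1 hE
      have hxj : ∀ j, x j ∈ X' := fun j => hEX (Finset.mem_image_of_mem _ (Finset.mem_univ j))
      exact ⟨⟨x, hx, hxj⟩, x, Finset.mem_filter.2 ⟨hx, hxi⟩, hxj⟩
    obtain ⟨X', hX', hc, hfree⟩ := this
    obtain ⟨T, hT1, hT2, hT3, hT4⟩ := hf X' hfree
    have hTV : T ∈ VV := by
      rw [hVV, Finset.mem_filter, Finset.mem_filter]
      exact ⟨⟨Finset.mem_univ _, hT3⟩, hT4⟩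
    refine le_trans ?_ (Finset.single_le_sum hnn hTV)
    rw [if_pos (hT1.trans hX'), ← Real.exp_add]
    apply Real.one_le_exp
    have hsub : X' ⊆ T ∪ (A ∩ (f T \ T)) := by
      intro v hv
      by_cases hvT : v ∈ T
      · exact Finset.mem_union_left _ hvT
      · apply Finset.mem_union_right
        rw [Finset.mem_inter, Finset.mem_sdiff]
        exact ⟨hX' hv, (Finset.mem_union.1 (hT2 hv)).resolve_left hvT, hvT⟩
    have hcc : (X'.card : ℝ) ≤ T.card + (A ∩ (f T \ T)).card := by
      exact_mod_cast (Finset.card_le_card hsub).trans (Finset.card_union_le _ _)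
    have a1 : δ * (w / 2) ≤ δ * A.card := mul_le_mul_of_nonneg_left hA.le hδ0.le
    have a2 : η * w ≤ δ / 4 * w := mul_le_mul_of_nonneg_right hη hw0.le
    rw [ht]
    linarith
  have hE := Ex_mono h0.le h1 (Finset.univ : Finset G) (fun A _ => hpt A)
  rw [Ex_const, Ex_add, Ex_add, Ex_sum] at hE
  have hs := size_low (G := G) h0 h1 hn
  rw [← hnd, ← hw] at hs
  have hsum : ∑ T ∈ VV, Ex p Finset.univ (fun A => Real.exp (-t) * (if T ⊆ A then Real.exp ((A ∩ (f T \ T)).card : ℝ) else 0)) ≤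
      10 / δ / w := by
    calc _ ≤ ∑ T ∈ VV, Real.exp (-t) * (p ^ T.card * Real.exp (2 * w * (δ / 40))) := by
          apply Finset.sum_le_sum
          intro T hT
          rw [Ex_mul]
          apply mul_le_mul_of_nonneg_left _ (Real.exp_pos _).le
          refine (Ex_exp h0.le h1 T (f T \ T) Finset.disjoint_sdiff).trans ?_
          apply mul_le_mul_of_nonneg_left _ (by positivity)
          rw [Real.exp_le_exp]
          have b1 := (Finset.mem_filter.1 hT).2
          have b2 : ((f T \ T).card : ℝ) ≤ (f T).card := by
            exact_mod_cast Finset.card_le_card Finset.sdiff_subset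
          have b3 : 2 * p * ((f T \ T).card : ℝ) ≤ 2 * p * (δ / 40 * n) :=
            mul_le_mul_of_nonneg_left (b2.trans b1) (by positivity)
          rw [hw]
          linarith
      _ = Real.exp (-t) * Real.exp (2 * w * (δ / 40)) * ∑ T ∈ VV, p ^ T.card := by
          rw [Finset.mul_sum]
          apply Finset.sum_congr rfl
          intros; ring
      _ ≤ Real.exp (-t) * Real.exp (2 * w * (δ / 40)) *
            Real.exp (η * w * Real.log (1 / (δ / 40)) + p * (δ / 40) * n) := by
          apply mul_le_mul_of_nonneg_left _ (by positivity)
          refine le_trans ?_ (sum_small (G := G) (p := p) (z := δ / 40) (s := η * w) h0.le (by positivity) (by linarith))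
          apply Finset.sum_le_sum_of_subset_of_nonneg (Finset.filter_subset _ _)
          intros; positivity
      _ ≤ Real.exp (-(δ / 10 * w)) := by
          rw [← Real.exp_add, ← Real.exp_add, Real.exp_le_exp]
          have c1 : η * Real.log (1 / (δ / 40)) * w ≤ δ / 40 * w := mul_le_mul_of_nonneg_right hηL hw0.le
          have c2 : p * (δ / 40) * n = δ / 40 * w := by rw [hw]; ring
          have c3 : 0 < δ * w := by positivity
          rw [c2, ht]
          linarith
      _ ≤ _ := by
          have c3 : 0 < δ / 10 * w := by positivity
          have c4 : Real.exp (-(δ / 10 * w)) ≤ (δ / 10 * w)⁻¹ := by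
            rw [Real.exp_neg]
            apply inv_anti₀ c3
            have := Real.add_one_le_exp (δ / 10 * w)
            linarith
          refine c4.trans (le_of_eq ?_)
          field_simp
  rw [add_div]
  linarith

lemma theta_pow (m : ℕ) {x : ℝ} (hx : 0 < x) :
    x ^ (m + 1) * (x ^ (-((((m + 3 : ℕ) : ℝ) - 2) / (((m + 3 : ℕ) : ℝ) - 1)))) ^ (m + 2) = 1 := by
  rw [← Real.rpow_natCast (x ^ _), ← Real.rpow_mul hx.le, ← Real.rpow_natCast, ← Real.rpow_add hx]
  have : ((m + 1 : ℕ) : ℝ) + -((((m + 3 : ℕ) : ℝ) - 2) / (((m + 3 : ℕ) : ℝ) - 1)) * ((m + 2 : ℕ) : ℝ) = 0 := by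
    push_cast
    have : (m : ℝ) + 3 - 1 = m + 2 := by ring
    rw [this]
    have h2 : (m : ℝ) + 2 ≠ 0 := by positivity
    field_simp
    ring
  rw [this, Real.rpow_zero]

lemma theta_mul (m : ℕ) {x : ℝ} (hx : 0 < x) :
    x ^ (-((((m + 3 : ℕ) : ℝ) - 2) / (((m + 3 : ℕ) : ℝ) - 1))) * x = x ^ (1 / ((m : ℝ) + 2)) := by
  nth_rewrite 2 [← Real.rpow_one x]
  rw [← Real.rpow_add hx]
  congr 1
  push_cast
  have : (m : ℝ) + 3 - 1 = m + 2 := by ring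
  rw [this]
  have h2 : (m : ℝ) + 2 ≠ 0 := by positivity
  field_simp
  ring

/-- threshold for the `(δ,S_i)_k`-stability of binomial random subsets with
respect to the equation `x_1^{r_1} ⋯ x_k^{r_k} = e` in finite (possibly non-abelian) groups. -/
theorem stmt15 (k : ℕ) (hk : 3 ≤ k) (r : Fin k → ℕ) (hr : ∀ j, 0 < r j)
    (G : ℕ → Type) [∀ i, Fintype (G i)] [∀ i, Group (G i)]
    (hG : Tendsto (fun i => (Fintype.card (G i) : ℝ)) atTop atTop)
    (hexp : ∀ i, Monoid.exponent (G i) ∣ ∑ j, r j)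
    (hcop : ∀ i j, Nat.Coprime (r j) (Fintype.card (G i)))
    (S : ∀ i, Finset (Fin k → G i))
    (hS : ∀ i (x : Fin k → G i), x ∈ S i ↔
      ((List.finRange k).map (fun j => x j ^ r j)).prod = 1)
    (δ : ℝ) (hδ0 : 0 < δ) (hδ : δ ≤ 1/40) :
    ∃ c₁ c₂ : ℝ, 0 < c₁ ∧ 0 < c₂ ∧
      ∀ p : ℕ → ℝ, (∀ i, 0 ≤ p i ∧ p i ≤ 1) →
        ((∀ i, c₁ * (Fintype.card (G i) : ℝ) ^ (-(((k:ℝ)-2)/((k:ℝ)-1))) ≤ p i) →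
          Tendsto (fun i => binomProb (p i)
              (Finset.univ.filter (fun A : Finset (G i) => StableK δ (S i) A)))
            atTop (nhds 1)) ∧
        ((∀ i, p i < c₂ * (Fintype.card (G i) : ℝ) ^ (-(((k:ℝ)-2)/((k:ℝ)-1)))) →
          Tendsto (fun i => binomProb (p i)
              (Finset.univ.filter (fun A : Finset (G i) => StableK δ (S i) A)))
            atTop (nhds 0)) := by
  obtain ⟨m, rfl⟩ : ∃ m, k = m + 3 := ⟨k - 3, by omega⟩
  set θ : ℝ := -((((m + 3 : ℕ) : ℝ) - 2) / (((m + 3 : ℕ) : ℝ) - 1)) with hθ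
  obtain ⟨κ, B, hκ, hB, n0, hcont⟩ := containers m (δ := δ / 40) (by positivity)
  have hQ : ∀ i, Det (S i) := fun i => det_of r (hcop i) (S i) (hS i)
  have hnpos : ∀ i, (0:ℝ) < Fintype.card (G i) := fun i => by exact_mod_cast Fintype.card_pos
  set L := Real.log (1 / (δ / 40)) with hL
  have hL0 : 0 < L := Real.log_pos (by rw [lt_div_iff₀ (by positivity)]; linarith)
  set η := min (δ / 4) (δ / 40 / L) with hη
  have hη0 : 0 < η := lt_min (by positivity) (by positivity)
  have hη1 : η ≤ δ / 4 := min_le_left _ _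
  have hη2 : η * L ≤ δ / 40 := by
    have : η ≤ δ / 40 / L := min_le_right _ _
    rwa [le_div_iff₀ hL0] at this
  have hroot : Tendsto (fun i => (Fintype.card (G i) : ℝ) ^ (1 / ((m : ℝ) + 2))) atTop atTop :=
    (tendsto_rpow_atTop (by positivity)).comp hG
  refine ⟨B * κ / η, 1 / 8, by positivity, by norm_num, ?_⟩
  intro p hp
  refine ⟨fun hlow => ?_, fun hup => ?_⟩
  · simp_rw [binomProb_eq]
    have hpn : ∀ i, B * κ / η * (Fintype.card (G i) : ℝ) ^ (1 / ((m : ℝ) + 2)) ≤ p i * Fintype.card (G i) := by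
      intro i
      rw [← theta_mul m (hnpos i), ← mul_assoc]
      exact mul_le_mul_of_nonneg_right (hlow i) (hnpos i).le
    have hpninf : Tendsto (fun i => p i * Fintype.card (G i)) atTop atTop :=
      tendsto_atTop_mono hpn (hroot.const_mul_atTop (by positivity))
    have hlim : Tendsto (fun i => 1 - (4 + 10 / δ) / (p i * Fintype.card (G i))) atTop (nhds 1) := by
      have := (hpninf.const_div_atTop (4 + 10 / δ)).const_sub 1
      simpa using this
    refine tendsto_of_tendsto_of_tendsto_of_le_of_le' hlim tendsto_const_nhds ?_ ?_
    · have ev1 : ∀ᶠ i in atTop, (n0 : ℝ) ≤ Fintype.card (G i) := hG.eventually_ge_atTop _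
      have ev2 : ∀ᶠ i in atTop, 1 / κ ≤ (Fintype.card (G i) : ℝ) ^ (1 / ((m : ℝ) + 2)) :=
        hroot.eventually_ge_atTop _
      have ev3 : ∀ᶠ i in atTop, (2 * κ) ^ (m + 2) ≤ (Fintype.card (G i) : ℝ) := hG.eventually_ge_atTop _
      filter_upwards [ev1, ev2, ev3] with i e1 e2 e3
      set n := Fintype.card (G i) with hn
      have hn0 := hnpos i
      rw [← hn] at hn0
      have hn1 : (1:ℝ) ≤ n := by
        have : 0 < n := by exact_mod_cast hn0
        exact_mod_cast this
      set q := κ * (n : ℝ) ^ θ with hq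
      have hq0 : 0 < q := by positivity
      have hqY : (n : ℝ) ^ (m + 1) * q ^ (m + 2) = κ ^ (m + 2) := by
        rw [hq, mul_pow, mul_left_comm, theta_pow m hn0, mul_one]
      have hqn : 1 ≤ q * n := by
        rw [hq, mul_assoc, theta_mul m hn0]
        rw [div_le_iff₀ hκ] at e2
        linarith
      have hq2 : q ≤ 1 / 2 := by
        by_contra hcon
        push Not at hcon
        have h2 : (1 / 2 : ℝ) ^ (m + 2) < q ^ (m + 2) := pow_lt_pow_left₀ hcon (by norm_num) (by omega)
        have h3 : (n : ℝ) ≤ (n : ℝ) ^ (m + 1) := le_self_pow₀ hn1 (by omega)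
        have h4 : (n : ℝ) * (1 / 2) ^ (m + 2) < κ ^ (m + 2) := by
          rw [← hqY]
          exact mul_lt_mul' h3 h2 (by positivity) (by positivity)
        rw [mul_pow] at e3
        have h5 : (2:ℝ) ^ (m + 2) * (1 / 2) ^ (m + 2) = 1 := by rw [← mul_pow]; norm_num
        have h6 : 2 ^ (m + 2) * κ ^ (m + 2) * (1 / 2 : ℝ) ^ (m + 2) ≤ n * (1 / 2 : ℝ) ^ (m + 2) :=
          mul_le_mul_of_nonneg_right e3 (by positivity)
        have h7 : 2 ^ (m + 2) * κ ^ (m + 2) * (1 / 2 : ℝ) ^ (m + 2) = κ ^ (m + 2) := by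
          rw [mul_right_comm, h5, one_mul]
        linarith
      obtain ⟨f, hf⟩ := hcont (G i) (by exact_mod_cast e1) r (hcop i) (hexp i) (S i) (hS i) q hq0 hq2 hqn hqY
      have hBq : B * (q * n) ≤ η * (p i * n) := by
        have h1 := hlow i
        rw [div_mul_eq_mul_div, div_le_iff₀ hη0] at h1
        have h2 : B * q ≤ η * p i := by rw [hq]; linarith
        have := mul_le_mul_of_nonneg_right h2 hn0.le
        linarith
      have hp0 : 0 < p i := lt_of_lt_of_le (by positivity) (hlow i)
      refine one_bound hp0 (hp i).2 hδ0 hδ Fintype.card_pos hη1 hη2 f ?_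
      intro I hI
      obtain ⟨S', a1, a2, a3, a4⟩ := hf I hI
      exact ⟨S', a1, a2, a3.trans hBq, a4⟩
    · filter_upwards with i
      have h := Ex_mono (hp i).1 (hp i).2 (Finset.univ : Finset (G i))
        (F := fun A => if StableK δ (S i) A then (1:ℝ) else 0) (F' := fun _ => 1)
        (fun A _ => by split_ifs <;> norm_num)
      rw [Ex_const] at h
      exact h
  · simp_rw [binomProb_eq]
    set Cc : ℝ := 12 + 2 ^ (m + 3) * ((m + 3 : ℕ) : ℝ) ^ (m + 3) with hCc
    have hCc0 : 0 < Cc := by positivity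
    have hY : ∀ i, (Fintype.card (G i) : ℝ) ^ (m + 1) * p i ^ (m + 2) ≤ 1 / 8 := by
      intro i
      have hn0 := hnpos i
      have h1 : p i ^ (m + 2) ≤ (1 / 8 * (Fintype.card (G i) : ℝ) ^ θ) ^ (m + 2) :=
        pow_le_pow_left₀ (hp i).1 (hup i).le _
      have h2 := mul_le_mul_of_nonneg_left h1 (show 0 ≤ (Fintype.card (G i) : ℝ) ^ (m + 1) by positivity)
      rw [mul_pow, mul_left_comm, theta_pow m hn0, mul_one] at h2
      exact h2.trans (pow_le_of_le_one (by norm_num) (by norm_num) (by omega))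
    rw [Metric.tendsto_atTop]
    intro ε hε
    set M := max 1 (2 * Cc / ε) with hM
    have hM1 : 1 ≤ M := le_max_left _ _
    have ev : ∀ᶠ i in atTop, 2 * M ^ (m + 3) / ε ≤ (Fintype.card (G i) : ℝ) := hG.eventually_ge_atTop _
    obtain ⟨N, hN⟩ := eventually_atTop.1 ev
    refine ⟨N, fun i hi => ?_⟩
    have hnn : 0 ≤ Ex (p i) Finset.univ (fun A => if StableK δ (S i) A then 1 else 0) := by
      apply Ex_nonneg (hp i).1 (hp i).2
      intro A _
      split_ifs <;> norm_num
    rw [Real.dist_eq, sub_zero, abs_of_nonneg hnn]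
    have hn0 := hnpos i
    set n : ℝ := (Fintype.card (G i) : ℝ) with hn
    by_cases hc : M ≤ p i * n
    · have h1 := zero_large (hQ i) (hp i).1 (hp i).2 hδ (hM1.trans hc) (hY i)
      refine lt_of_le_of_lt h1 ?_
      rw [div_lt_iff₀ (by linarith)]
      have h2 : 2 * Cc / ε ≤ p i * n := (le_max_right _ _).trans hc
      rw [div_le_iff₀ hε] at h2
      change Cc < ε * (p i * n)
      linarith
    · push Not at hc
      have h1 := zero_small (hQ i) (hp i).1 (hp i).2 hδ
      refine lt_of_le_of_lt h1 ?_
      have h2 := hN i hi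
      have e1 : n ^ (m + 1) * p i ^ (m + 2) * (p i * n) = (p i * n) ^ (m + 3) / n := by
        rw [eq_div_iff hn0.ne']; ring
      have h3 : (p i * n) ^ (m + 3) ≤ M ^ (m + 3) :=
        pow_le_pow_left₀ (mul_nonneg (hp i).1 hn0.le) hc.le _
      change n ^ (m + 1) * p i ^ (m + 2) * (p i * n) < ε
      rw [e1, div_lt_iff₀ hn0]
      rw [div_le_iff₀ hε] at h2
      have : 0 < M ^ (m + 3) := by positivity
      linarith
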